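/- arXiv:1112.3800 — 2 statements merged into one kernel-verified Lean document; each statement's English description precedes it below -/
import Mathlib

section
/- Nullstellensatz for k-regulous functions: let n, k be natural numbers. (1) For every ideal I of R^k(ℝⁿ), the ideal {f ∈ R^k(ℝⁿ) : f(x) = 0 for all x ∈ Z(I)} equals the radical of I, where Z(I) = ⋂_{g ∈ I} Z(g). (2) For every subset E of R^k(ℝⁿ), setting F = ⋂_{g ∈ E} Z(g), one has Z({f ∈ R^k(ℝⁿ) : f vanishes on F}) = F. -/
open MvPolynomial

/-- A function `f : ℝⁿ → ℝ` is `k`-regulous if it is of class `C^k` on all of `ℝⁿ` and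
agrees with a rational function: there are polynomials `p`, `q` with `q ≠ 0` and
`q(x) * f(x) = p(x)` for every `x`. -/
def IsRegulous (n k : ℕ) (f : (Fin n → ℝ) → ℝ) : Prop :=
  ContDiff ℝ k f ∧ ∃ p q : MvPolynomial (Fin n) ℝ, q ≠ 0 ∧
    ∀ x : Fin n → ℝ, eval x q * f x = eval x p

/-- The ring `R^k(ℝⁿ)` of `k`-regulous functions, as a subring of the ring of all
functions `ℝⁿ → ℝ` with pointwise operations. -/
def regulousRing (n k : ℕ) : Subring ((Fin n → ℝ) → ℝ) where
  carrier := {f | IsRegulous n k f}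
  one_mem' := ⟨contDiff_const, 1, 1, one_ne_zero, by simp⟩
  zero_mem' := ⟨contDiff_const, 0, 1, one_ne_zero, by simp⟩
  mul_mem' := by
    rintro f g ⟨hf, p₁, q₁, hq₁, h₁⟩ ⟨hg, p₂, q₂, hq₂, h₂⟩
    refine ⟨hf.mul hg, p₁ * p₂, q₁ * q₂, mul_ne_zero hq₁ hq₂, fun x => ?_⟩
    simp only [eval_mul, Pi.mul_apply]
    linear_combination (eval x q₂ * g x) * h₁ x + eval x p₁ * h₂ x
  add_mem' := by
    rintro f g ⟨hf, p₁, q₁, hq₁, h₁⟩ ⟨hg, p₂, q₂, hq₂, h₂⟩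
    refine ⟨hf.add hg, p₁ * q₂ + p₂ * q₁, q₁ * q₂, mul_ne_zero hq₁ hq₂, fun x => ?_⟩
    simp only [eval_mul, eval_add, Pi.add_apply]
    linear_combination (eval x q₂) * h₁ x + (eval x q₁) * h₂ x
  neg_mem' := by
    rintro f ⟨hf, p, q, hq, h⟩
    refine ⟨hf.neg, -p, q, hq, fun x => ?_⟩
    simp only [map_neg, Pi.neg_apply]
    linear_combination -(h x)


namespace RegNull

set_option linter.unusedVariables false

/-- Order preserving finite correspondence. -/
def PI (Z : Set (ℝ × ℝ)) : Prop := ∀ p ∈ Z, ∀ q ∈ Z, (p.1 < q.1 ↔ p.2 < q.2)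

/-- `a` and `b` are in the same position with respect to `Z`. -/
def Pos (Z : Set (ℝ × ℝ)) (a b : ℝ) : Prop :=
  ∀ p ∈ Z, (p.1 < a ↔ p.2 < b) ∧ (a < p.1 ↔ b < p.2)

/-- `Z` controls the signs of all pairs in `G`. -/
def Good (Z : Set (ℝ × ℝ)) (G : Set (Polynomial ℝ × Polynomial ℝ)) : Prop :=
  Z.Finite ∧ PI Z ∧ ∀ a b, Pos Z a b → ∀ g ∈ G,
    SignType.sign (g.1.eval a) = SignType.sign (g.2.eval b)

/-- swapping both sides -/
def swp {α β : Type*} (Z : Set (α × β)) : Set (β × α) := {p | (p.2, p.1) ∈ Z}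

lemma PI.swp {Z} (h : PI Z) : PI (swp Z) := fun p hp q hq => (h _ hp _ hq).symm

lemma Pos.swp {Z a b} (h : Pos Z a b) : Pos (swp Z) b a :=
  fun p hp => ⟨(h _ hp).1.symm, (h _ hp).2.symm⟩

lemma finite_swp {Z : Set (ℝ × ℝ)} (h : Z.Finite) : (swp Z).Finite := by
  have : swp Z = Prod.swap '' Z := by
    ext p; constructor
    · intro hp; exact ⟨(p.2, p.1), hp, rfl⟩
    · rintro ⟨q, hq, rfl⟩; exact hq
  rw [this]; exact h.image _

lemma Good.swp {Z G} (h : Good Z G) : Good (swp Z) (swp G) :=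
  ⟨finite_swp h.1, h.2.1.swp, fun a b hab g hg => (h.2.2 b a hab.swp _ hg).symm⟩

lemma pos_of_mem {Z p} (h : PI Z) (hp : p ∈ Z) : Pos Z p.1 p.2 :=
  fun q hq => ⟨h _ hq _ hp, h _ hp _ hq⟩

lemma eq_of_pos {Z a b c} (h : Pos Z a b) (hp : (a, c) ∈ Z) : c = b := by
  have := h _ hp
  simp only [lt_irrefl, false_iff, not_lt] at this
  exact le_antisymm this.2 this.1

lemma exists_pos {Z} (hf : Z.Finite) (h : PI Z) (a : ℝ) : ∃ b, Pos Z a b := by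
  classical
  by_cases ha : ∃ c, (a, c) ∈ Z
  · obtain ⟨c, hc⟩ := ha
    exact ⟨c, pos_of_mem h hc⟩
  · push Not at ha
    obtain ⟨b, hb, hb'⟩ := Order.exists_between_finsets
      ((hf.toFinset.filter (fun p => p.1 < a)).image Prod.snd)
      ((hf.toFinset.filter (fun p => a < p.1)).image Prod.snd) (by
        intro x hx y hy
        simp only [Finset.mem_image, Finset.mem_filter, Set.Finite.mem_toFinset] at hx hy
        obtain ⟨p, ⟨hp, hpa⟩, rfl⟩ := hx
        obtain ⟨q, ⟨hq, hqa⟩, rfl⟩ := hy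
        exact (h _ hp _ hq).1 (hpa.trans hqa))
    simp only [Finset.mem_image, Finset.mem_filter, Set.Finite.mem_toFinset] at hb hb'
    refine ⟨b, fun p hp => ?_⟩
    rcases lt_trichotomy p.1 a with hlt | heq | hgt
    · have := hb p.2 ⟨p, ⟨hp, hlt⟩, rfl⟩
      exact ⟨⟨fun _ => this, fun _ => hlt⟩, ⟨fun h => absurd h hlt.not_gt, fun h => absurd h this.not_gt⟩⟩
    · exact absurd (by rw [← heq]; exact hp) (ha p.2)
    · have := hb' p.2 ⟨p, ⟨hp, hgt⟩, rfl⟩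
      exact ⟨⟨fun h => absurd h hgt.not_gt, fun h => absurd h this.not_gt⟩, ⟨fun _ => this, fun _ => hgt⟩⟩

lemma zero_right {Z G} (h : Good Z G) {g} (hg : g ∈ G) (h0 : g.1 = 0) : g.2 = 0 := by
  apply Polynomial.funext
  intro b
  obtain ⟨a, ha⟩ := exists_pos (finite_swp h.1) h.2.1.swp b
  have := h.2.2 a b ha.swp g hg
  rw [h0] at this
  simpa using this.symm

lemma root_mem {Z G} (h : Good Z G) {g} (hg : g ∈ G) (h0 : g.1 ≠ 0) {a : ℝ}
    (ha : g.1.eval a = 0) : ∃ b, (a, b) ∈ Z := by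
  by_contra hcon
  push Not at hcon
  obtain ⟨b, hb⟩ := exists_pos h.1 h.2.1 a
  have hev : ∀ᶠ w in nhds a, Pos Z w b := by
    unfold Pos
    have : ∀ p ∈ Z, ∀ᶠ w in nhds a, (p.1 < w ↔ p.2 < b) ∧ (w < p.1 ↔ b < p.2) := by
      intro p hp
      have hpb := hb p hp
      rcases lt_trichotomy p.1 a with hlt | heq | hgt
      · filter_upwards [lt_mem_nhds hlt] with w hw
        have := hpb.1.1 hlt
        exact ⟨⟨fun _ => this, fun _ => hw⟩, ⟨fun h => absurd h hw.not_gt, fun h => absurd h this.not_gt⟩⟩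
      · exact absurd (by rw [← heq]; exact hp) (hcon p.2)
      · filter_upwards [gt_mem_nhds hgt] with w hw
        have := hpb.2.1 hgt
        exact ⟨⟨fun h => absurd h hw.not_gt, fun h => absurd h this.not_gt⟩, ⟨fun _ => this, fun _ => hw⟩⟩
    exact (Filter.eventually_all_finite h.1).2 this
  apply h0
  apply Polynomial.eq_zero_of_infinite_isRoot
  apply (infinite_of_mem_nhds a hev).mono
  intro w hw
  have h1 := h.2.2 w b hw g hg
  have h2 := h.2.2 a b hb g hg
  rw [ha] at h2
  rw [← h2] at h1
  simpa using h1

lemma pos_between {Z a b a1 w} (h : Pos Z a b) (h1 : Pos Z a1 b) (haw : a ≤ w) (hw : w ≤ a1) :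
    Pos Z w b := by
  intro p hp
  have := h p hp
  have := h1 p hp
  constructor <;> constructor <;> intro hh
  · have : p.1 < a1 := by linarith
    tauto
  · have : p.1 < a := by tauto
    linarith
  · have : a < p.1 := by linarith
    tauto
  · have : a1 < p.1 := by tauto
    linarith

/-- sign of derivative positive on an interval implies strictly increasing -/
lemma poly_mono (P : Polynomial ℝ) {a a1 : ℝ} (hlt : a < a1)
    (h : ∀ w, a ≤ w → w < a1 → 0 < P.derivative.eval w) : P.eval a < P.eval a1 := by
  have : StrictMonoOn (fun x => P.eval x) (Set.Icc a a1) := by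
    apply strictMonoOn_of_deriv_pos (convex_Icc a a1) P.continuous.continuousOn
    intro x hx
    rw [interior_Icc] at hx
    rw [Polynomial.deriv]
    exact h x hx.1.le hx.2
  exact this (Set.left_mem_Icc.2 hlt.le) (Set.right_mem_Icc.2 hlt.le) hlt

lemma class_mono {Z G} (h : Good Z G) {P P' : Polynomial ℝ}
    (hd : (P.derivative, P'.derivative) ∈ G) {a a1 b : ℝ} (ha : Pos Z a b) (ha1 : Pos Z a1 b)
    (hlt : a < a1) (hpos : 0 < P.derivative.eval a) : P.eval a < P.eval a1 := by
  apply poly_mono P hlt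
  intro w hw hw1
  have h1 := h.2.2 w b (pos_between ha ha1 hw hw1.le) _ hd
  have h2 := h.2.2 a b ha _ hd
  rw [← h2] at h1
  simp only at h1
  rw [sign_pos hpos] at h1
  exact sign_eq_one_iff.1 h1

/-- growth at infinity -/
lemma exists_large (P : Polynomial ℝ) {b : ℝ} (h : ∀ w, b ≤ w → 0 < P.derivative.eval w) :
    ∃ w, b < w ∧ 0 < P.eval w := by
  have hdeg : 0 < P.degree := by
    by_contra hcon
    have : P.derivative = 0 := by
      rw [Polynomial.eq_C_of_degree_le_zero (not_lt.1 hcon)]; simp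
    have h1 := h b le_rfl
    rw [this] at h1
    simp at h1
  rcases le_total 0 P.leadingCoeff with hl | hl
  · have := P.tendsto_atTop_of_leadingCoeff_nonneg hdeg hl
    obtain ⟨w, hw⟩ := ((this.eventually_gt_atTop 0).and (Filter.eventually_gt_atTop b)).exists
    exact ⟨w, hw.2, hw.1⟩
  · have := P.tendsto_atBot_of_leadingCoeff_nonpos hdeg hl
    obtain ⟨w, hw⟩ := ((this.eventually_lt_atBot (P.eval b)).and (Filter.eventually_gt_atTop b)).exists
    have h2 := poly_mono P hw.2 (fun x hx _ => h x hx)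
    exact absurd hw.1 h2.not_gt

lemma ivt_root (P : Polynomial ℝ) {b w : ℝ} (hbw : b < w) (hb : P.eval b < 0) (hw : 0 < P.eval w) :
    ∃ r, b < r ∧ r < w ∧ P.eval r = 0 := by
  have := intermediate_value_Ioo hbw.le (f := fun x => P.eval x) P.continuous.continuousOn
  obtain ⟨r, hr, hr0⟩ := this (show (0 : ℝ) ∈ _ from ⟨hb, hw⟩)
  exact ⟨r, hr.1, hr.2, hr0⟩

lemma lemR {Z G} (h : Good Z G) {P P' : Polynomial ℝ}
    (hd : (P.derivative, P'.derivative) ∈ G)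
    (hZ : ∀ p ∈ Z, SignType.sign (P.eval p.1) = SignType.sign (P'.eval p.2))
    {a b : ℝ} (hab : Pos Z a b) (hpos : 0 < P.derivative.eval a) (h1 : 0 ≤ P.eval a)
    (h2 : P'.eval b < 0) : ∃ r, b < r ∧ P'.eval r = 0 ∧ Pos Z a r := by
  have hna : ∀ p ∈ Z, p.1 ≠ a := by
    intro p hp hpa
    have hpb : p.2 = b := eq_of_pos hab (by rw [← hpa]; exact hp)
    have := hZ p hp
    rw [hpa, hpb, sign_neg h2, sign_eq_neg_one_iff] at this
    linarith
  have hnb : ∀ p ∈ Z, p.2 ≠ b := by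
    intro p hp hpb
    have := (hab p hp)
    rw [hpb] at this
    simp only [lt_irrefl, iff_false, not_lt] at this
    exact hna p hp (le_antisymm this.2 this.1)
  have hsd : ∀ w, Pos Z a w → 0 < P'.derivative.eval w := by
    intro w hw
    have := h.2.2 a w hw _ hd
    rw [sign_pos hpos] at this
    exact sign_eq_one_iff.1 this.symm
  by_cases hne : ∃ p ∈ Z, b < p.2
  · have hfin : {p ∈ Z | b < p.2}.Finite := h.1.subset (Set.sep_subset _ _)
    obtain ⟨p, hp, hmin⟩ := Set.exists_min_image {p ∈ Z | b < p.2} Prod.snd hfin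
      (by obtain ⟨p, hp⟩ := hne; exact ⟨p, hp⟩)
    have hap : a < p.1 := (hab p hp.1).2.2 hp.2
    have hposw : ∀ w, b ≤ w → w < p.2 → Pos Z a w := by
      intro w hw hwp q hq
      have hqq := hab q hq
      rcases lt_or_gt_of_ne (hnb q hq) with hq2 | hq2
      · have := hqq.1.2 hq2
        exact ⟨⟨fun _ => by linarith, fun _ => this⟩, ⟨fun h => by linarith, fun h => by linarith⟩⟩
      · have := hqq.2.2 hq2
        have := hmin q ⟨hq, hq2⟩
        exact ⟨⟨fun h => by linarith, fun h => by linarith⟩, ⟨fun h => by linarith, fun h => by linarith⟩⟩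
    have hPa : P.eval a < P.eval p.1 := by
      apply poly_mono P hap
      intro w hw hwp
      have hwb : Pos Z w b := by
        intro q hq
        have hqq := hab q hq
        rcases lt_or_gt_of_ne (hnb q hq) with hq2 | hq2
        · have := hqq.1.2 hq2
          exact ⟨⟨fun _ => by linarith, fun _ => by linarith⟩, ⟨fun h => by linarith, fun h => by linarith⟩⟩
        · have := hqq.2.2 hq2
          have h3 := hmin q ⟨hq, hq2⟩
          have h4 : p.1 ≤ q.1 := by
            by_contra hcon
            have := (h.2.1 q hq p hp.1).1 (not_le.1 hcon)
            linarith
          exact ⟨⟨fun h => by linarith, fun h => by linarith⟩, ⟨fun h => by linarith, fun h => by linarith⟩⟩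
      have := h.2.2 w b hwb _ hd
      rw [sign_pos (hsd b hab)] at this
      exact sign_eq_one_iff.1 this
    have hp2 : 0 < P'.eval p.2 := by
      have := hZ p hp.1
      rw [sign_pos (by linarith)] at this
      exact sign_eq_one_iff.1 this.symm
    obtain ⟨r, hbr, hrp, hr0⟩ := ivt_root P' hp.2 h2 hp2
    exact ⟨r, hbr, hr0, hposw r hbr.le hrp⟩
  · push Not at hne
    have hposw : ∀ w, b ≤ w → Pos Z a w := by
      intro w hw q hq
      have hqq := hab q hq
      have hq2 : q.2 < b := lt_of_le_of_ne (hne q hq) (hnb q hq)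
      have := hqq.1.2 hq2
      exact ⟨⟨fun _ => by linarith, fun _ => this⟩, ⟨fun h => by linarith, fun h => by linarith⟩⟩
    obtain ⟨w, hbw, hw0⟩ := exists_large P' (fun w hw => hsd w (hposw w hw))
    obtain ⟨r, hbr, hrp, hr0⟩ := ivt_root P' hbw h2 hw0
    exact ⟨r, hbr, hr0, hposw r hbr.le⟩

/-- reflection of a polynomial -/
noncomputable def rfl' (P : Polynomial ℝ) : Polynomial ℝ := -(P.comp (-Polynomial.X))

lemma rfl'_eval (P : Polynomial ℝ) (a : ℝ) : (rfl' P).eval a = -P.eval (-a) := by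
  simp [rfl']

lemma rfl'_deriv (P : Polynomial ℝ) (a : ℝ) : (rfl' P).derivative.eval a = P.derivative.eval (-a) := by
  simp [rfl', Polynomial.derivative_comp]

/-- reflection of a correspondence -/
def rflZ (Z : Set (ℝ × ℝ)) : Set (ℝ × ℝ) := {p | (-p.1, -p.2) ∈ Z}

lemma rflZ_pos {Z a b} (h : Pos (rflZ Z) a b) : Pos Z (-a) (-b) := by
  intro p hp
  have := h (-p.1, -p.2) (by simpa [rflZ] using hp)
  exact ⟨lt_neg.trans (this.2.trans lt_neg), neg_lt.trans (this.1.trans neg_lt)⟩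

lemma rflZ_pos' {Z a b} (h : Pos Z a b) : Pos (rflZ Z) (-a) (-b) := by
  intro p hp
  have := h (-p.1, -p.2) hp
  exact ⟨lt_neg.trans (this.2.trans lt_neg), neg_lt.trans (this.1.trans neg_lt)⟩

lemma rflZ_good {Z G} (h : Good Z G) {P P' : Polynomial ℝ}
    (hd : (P.derivative, P'.derivative) ∈ G) :
    Good (rflZ Z) {((rfl' P).derivative, (rfl' P').derivative)} := by
  refine ⟨?_, ?_, ?_⟩
  · have : rflZ Z = (fun p : ℝ × ℝ => (-p.1, -p.2)) ⁻¹' Z := rfl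
    rw [this]
    apply h.1.preimage
    intro p _ q _ hpq
    simp only [Prod.mk.injEq, neg_inj] at hpq
    exact Prod.ext hpq.1 hpq.2
  · intro p hp q hq
    have := h.2.1 _ hq _ hp
    simpa using this
  · rintro a b hab g rfl
    simp only [rfl'_deriv]
    exact h.2.2 _ _ (rflZ_pos hab) _ hd

lemma lemL {Z G} (h : Good Z G) {P P' : Polynomial ℝ}
    (hd : (P.derivative, P'.derivative) ∈ G)
    (hZ : ∀ p ∈ Z, SignType.sign (P.eval p.1) = SignType.sign (P'.eval p.2))
    {a b : ℝ} (hab : Pos Z a b) (hpos : 0 < P.derivative.eval a) (h1 : P.eval a ≤ 0)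
    (h2 : 0 < P'.eval b) : ∃ r, P'.eval r = 0 ∧ Pos Z a r := by
  obtain ⟨r, -, hr, hr'⟩ := lemR (rflZ_good h hd) (P := rfl' P) (P' := rfl' P') rfl
    (by
      intro p hp
      rw [rfl'_eval, rfl'_eval, Left.sign_neg, Left.sign_neg]
      rw [hZ _ hp]) (rflZ_pos' hab) (by rw [rfl'_deriv]; simpa using hpos)
    (by rw [rfl'_eval]; simpa using h1) (by rw [rfl'_eval]; simpa using h2)
  refine ⟨-r, ?_, by simpa using rflZ_pos hr'⟩
  rw [rfl'_eval] at hr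
  linarith

/-- negation of the family -/
lemma neg_good {Z G} (h : Good Z G) {P P' : Polynomial ℝ}
    (hd : (P.derivative, P'.derivative) ∈ G) :
    Good Z (insert ((-P).derivative, (-P').derivative) G) := by
  refine ⟨h.1, h.2.1, ?_⟩
  rintro a b hab g (rfl | hg)
  · have := h.2.2 a b hab _ hd
    simp only [Polynomial.derivative_neg, Polynomial.eval_neg, Left.sign_neg] at this ⊢
    rw [this]
  · exact h.2.2 a b hab _ hg

lemma neg_sign {Z : Set (ℝ × ℝ)} {P P' : Polynomial ℝ}
    (hZ : ∀ p ∈ Z, SignType.sign (P.eval p.1) = SignType.sign (P'.eval p.2)) :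
    ∀ p ∈ Z, SignType.sign ((-P).eval p.1) = SignType.sign ((-P').eval p.2) := by
  intro p hp
  rw [Polynomial.eval_neg, Polynomial.eval_neg, Left.sign_neg, Left.sign_neg, hZ p hp]

/-- every root has a matching root -/
lemma match_root {Z G} (h : Good Z G) {P P' : Polynomial ℝ}
    (hd : (P.derivative, P'.derivative) ∈ G) (hd0 : P.derivative ≠ 0)
    (hZ : ∀ p ∈ Z, SignType.sign (P.eval p.1) = SignType.sign (P'.eval p.2))
    {a : ℝ} (ha : P.eval a = 0) : ∃ r, P'.eval r = 0 ∧ Pos Z a r := by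
  by_cases hda : P.derivative.eval a = 0
  · obtain ⟨b, hb⟩ := root_mem h hd hd0 hda
    refine ⟨b, ?_, pos_of_mem h.2.1 hb⟩
    have := hZ _ hb
    rw [ha] at this
    simpa using this.symm
  obtain ⟨b, hb⟩ := exists_pos h.1 h.2.1 a
  have main : ∀ P P' : Polynomial ℝ, ∀ G, Good Z G → (P.derivative, P'.derivative) ∈ G →
      (∀ p ∈ Z, SignType.sign (P.eval p.1) = SignType.sign (P'.eval p.2)) → P.eval a = 0 →
      0 < P.derivative.eval a → ∃ r, P'.eval r = 0 ∧ Pos Z a r := by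
    intro P P' G h hd hZ ha hpos
    rcases lt_trichotomy (P'.eval b) 0 with h0 | h0 | h0
    · obtain ⟨r, -, h1, h2⟩ := lemR h hd hZ hb hpos ha.ge h0
      exact ⟨r, h1, h2⟩
    · exact ⟨b, h0, hb⟩
    · exact lemL h hd hZ hb hpos ha.le h0
  rcases lt_or_gt_of_ne hda with hlt | hgt
  · obtain ⟨r, h1, h2⟩ := main (-P) (-P') _ (neg_good h hd) (Set.mem_insert _ _) (neg_sign hZ)
      (by simp [ha]) (by simpa using hlt)
    exact ⟨r, by simpa using h1, h2⟩
  · exact main P P' G h hd hZ ha hgt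

lemma mem_swp {α β : Type*} {Z : Set (α × β)} {a : α} {b : β} (h : (a, b) ∈ Z) : (b, a) ∈ swp Z := h

lemma sign_swp {Z : Set (ℝ × ℝ)} {P P' : Polynomial ℝ}
    (hZ : ∀ p ∈ Z, SignType.sign (P.eval p.1) = SignType.sign (P'.eval p.2)) :
    ∀ p ∈ swp Z, SignType.sign (P'.eval p.1) = SignType.sign (P.eval p.2) :=
  fun p hp => (hZ (p.2, p.1) hp).symm

/-- monotonicity of matched roots -/
lemma step_key {Z G} {P P' : Polynomial ℝ} (h : Good Z G)
    (hd : (P.derivative, P'.derivative) ∈ G) (hd0 : P.derivative ≠ 0) {u v u1 v1 : ℝ}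
    (hu : P.eval u = 0) (hu1 : P.eval u1 = 0) (huv : Pos Z u v) (huv1 : Pos Z u1 v1)
    (hlt : u < u1) : v < v1 := by
  obtain ⟨w, hw, hw0⟩ := exists_deriv_eq_zero (f := fun x => P.eval x) hlt
    P.continuous.continuousOn (by simp [hu, hu1])
  rw [Polynomial.deriv] at hw0
  obtain ⟨w', hw'⟩ := root_mem h hd hd0 hw0
  have e1 := (huv _ hw').2.1 hw.1
  have e2 := (huv1 _ hw').1.1 hw.2
  exact e1.trans e2

lemma step_contra {Z N : Set (ℝ × ℝ)} {G} {P P' : Polynomial ℝ} {a b : ℝ} (h : Good Z G)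
    (hd : (P.derivative, P'.derivative) ∈ G) (hd0' : P'.derivative ≠ 0)
    (hZ : ∀ p ∈ Z, SignType.sign (P.eval p.1) = SignType.sign (P'.eval p.2))
    (hN : ∀ u v, P.eval u = 0 → P'.eval v = 0 → Pos Z u v → (u, v) ∈ N)
    (habZ : Pos Z a b) (habN : Pos N a b)
    (hpos : 0 < P.derivative.eval a) (h1 : 0 < P.eval a) (h2 : P'.eval b < 0) : False := by
  obtain ⟨r, hbr, hr0, hr⟩ := lemR h hd hZ habZ hpos h1.le h2
  obtain ⟨s, hs0, hs⟩ := match_root h.swp (mem_swp hd) hd0' (sign_swp hZ) hr0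
  have hs' : Pos Z s r := hs.swp
  have has : a < s := (habN (s, r) (hN s r hs0 hr0 hs')).2.2 hbr
  have := class_mono h hd hr hs' has hpos
  linarith

lemma step_final {Z N : Set (ℝ × ℝ)} {G} {P P' : Polynomial ℝ} {a b : ℝ} (h : Good Z G)
    (hd : (P.derivative, P'.derivative) ∈ G) (hd0 : P.derivative ≠ 0) (hd0' : P'.derivative ≠ 0)
    (hZ : ∀ p ∈ Z, SignType.sign (P.eval p.1) = SignType.sign (P'.eval p.2))
    (hN : ∀ u v, P.eval u = 0 → P'.eval v = 0 → Pos Z u v → (u, v) ∈ N)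
    (habZ : Pos Z a b) (habN : Pos N a b)
    (hpos : 0 < P.derivative.eval a) (hpos' : 0 < P'.derivative.eval b)
    (ha : P.eval a ≠ 0) (hb : P'.eval b ≠ 0) :
    SignType.sign (P.eval a) = SignType.sign (P'.eval b) := by
  rcases lt_or_gt_of_ne ha with ha | ha <;> rcases lt_or_gt_of_ne hb with hb | hb
  · rw [sign_neg ha, sign_neg hb]
  · exfalso
    exact step_contra (N := swp N) h.swp (mem_swp hd) hd0 (sign_swp hZ)
      (fun u v hu hv huv => mem_swp (hN v u hv hu huv.swp))
      habZ.swp habN.swp hpos' hb ha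
  · exfalso
    exact step_contra h hd hd0' hZ hN habZ habN hpos ha hb
  · rw [sign_pos ha, sign_pos hb]

lemma step_sign {Z N : Set (ℝ × ℝ)} {G} {P P' : Polynomial ℝ} {a b : ℝ} (h : Good Z G)
    (hd : (P.derivative, P'.derivative) ∈ G) (hd0 : P.derivative ≠ 0) (hd0' : P'.derivative ≠ 0)
    (hZ : ∀ p ∈ Z, SignType.sign (P.eval p.1) = SignType.sign (P'.eval p.2))
    (hN : ∀ u v, P.eval u = 0 → P'.eval v = 0 → Pos Z u v → (u, v) ∈ N)
    (habZ : Pos Z a b) (habN : Pos N a b) :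
    SignType.sign (P.eval a) = SignType.sign (P'.eval b) := by
  have zero_iff : P.eval a = 0 ↔ P'.eval b = 0 := by
    constructor
    · intro h0
      obtain ⟨r, hr0, hr⟩ := match_root h hd hd0 hZ h0
      have : r = b := eq_of_pos habN (hN a r h0 hr0 hr)
      rw [← this]; exact hr0
    · intro h0
      obtain ⟨r, hr0, hr⟩ := match_root h.swp (mem_swp hd) hd0' (sign_swp hZ) h0
      have : r = a := eq_of_pos habN.swp (mem_swp (hN r b hr0 h0 hr.swp))
      rw [← this]; exact hr0
  by_cases hPa : P.eval a = 0
  · rw [hPa, zero_iff.1 hPa]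
  have hPb : P'.eval b ≠ 0 := fun h => hPa (zero_iff.2 h)
  have hsd : SignType.sign (P.derivative.eval a) = SignType.sign (P'.derivative.eval b) :=
    h.2.2 a b habZ _ hd
  by_cases hda : P.derivative.eval a = 0
  · obtain ⟨c, hc⟩ := root_mem h hd hd0 hda
    have : c = b := eq_of_pos habZ hc
    subst this
    exact hZ _ hc
  rcases lt_or_gt_of_ne hda with hlt | hgt
  · rw [sign_neg hlt] at hsd
    have hlt' := sign_eq_neg_one_iff.1 hsd.symm
    have e1 : (-P).derivative ≠ 0 := by rw [Polynomial.derivative_neg]; exact neg_ne_zero.2 hd0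
    have e2 : (-P').derivative ≠ 0 := by rw [Polynomial.derivative_neg]; exact neg_ne_zero.2 hd0'
    have := step_final (neg_good h hd) (Set.mem_insert _ _) e1 e2 (neg_sign hZ)
      (fun u v hu hv huv => hN u v (by simpa using hu) (by simpa using hv) huv) habZ habN
      (by simpa using hlt) (by simpa using hlt') (by simpa using hPa) (by simpa using hPb)
    rw [Polynomial.eval_neg, Polynomial.eval_neg, Left.sign_neg, Left.sign_neg] at this
    exact neg_inj.1 this
  · rw [sign_pos hgt] at hsd
    have hgt' := sign_eq_one_iff.1 hsd.symm
    exact step_final h hd hd0 hd0' hZ hN habZ habN hgt hgt' hPa hPb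

lemma step {Z G} (h : Good Z G) {P P' : Polynomial ℝ}
    (hd : (P.derivative, P'.derivative) ∈ G) (hd0 : P.derivative ≠ 0)
    (hZ : ∀ p ∈ Z, SignType.sign (P.eval p.1) = SignType.sign (P'.eval p.2)) :
    ∃ Z', Good Z' (insert (P, P') G) := by
  have hd0' : P'.derivative ≠ 0 := by
    intro h0
    exact hd0 (zero_right h.swp (mem_swp hd) h0)
  have hP0 : P ≠ 0 := fun h0 => hd0 (by rw [h0, Polynomial.derivative_zero])
  have hP0' : P' ≠ 0 := fun h0 => hd0' (by rw [h0, Polynomial.derivative_zero])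
  obtain ⟨N, hNdef⟩ : ∃ N : Set (ℝ × ℝ), ∀ p, p ∈ N ↔
      (P.eval p.1 = 0 ∧ P'.eval p.2 = 0 ∧ Pos Z p.1 p.2) := ⟨{p | _}, fun p => Iff.rfl⟩
  have hNfin : N.Finite := by
    apply ((Polynomial.finite_setOfPred_isRoot hP0).prod
      (Polynomial.finite_setOfPred_isRoot hP0')).subset
    intro p hp
    obtain ⟨h1, h2, -⟩ := (hNdef p).1 hp
    exact ⟨h1, h2⟩
  have hPI : PI (Z ∪ N) := by
    rintro p (hp | hp) q (hq | hq)
    · exact h.2.1 p hp q hq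
    · exact (((hNdef q).1 hq).2.2 p hp).1
    · exact (((hNdef p).1 hp).2.2 q hq).2
    · obtain ⟨p1, p2, p3⟩ := (hNdef p).1 hp
      obtain ⟨q1, q2, q3⟩ := (hNdef q).1 hq
      constructor
      · exact step_key h hd hd0 p1 q1 p3 q3
      · exact step_key h.swp (mem_swp hd) hd0' p2 q2 p3.swp q3.swp
  refine ⟨Z ∪ N, h.1.union hNfin, hPI, ?_⟩
  rintro a b hab g (rfl | hg)
  · exact step_sign h hd hd0 hd0' hZ (fun u v hu hv huv => (hNdef _).2 ⟨hu, hv, huv⟩)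
      (fun p hp => hab p (Or.inl hp)) (fun p hp => hab p (Or.inr hp))
  · exact h.2.2 a b (fun p hp => hab p (Or.inl hp)) g hg

/-- restriction to the roots of a subfamily -/
lemma restrict {Z G} (h : Good Z G) {G1} (hG : G1 ⊆ G) :
    Good {p ∈ Z | ∃ g ∈ G1, g.1 ≠ 0 ∧ g.1.eval p.1 = 0} G1 := by
  refine ⟨h.1.subset (Set.sep_subset _ _), fun p hp q hq => h.2.1 p hp.1 q hq.1, ?_⟩
  intro a b hab g hg
  obtain ⟨c, hc⟩ := exists_pos h.1 h.2.1 a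
  have hac := h.2.2 a c hc g (hG hg)
  rw [hac]
  by_cases hg0 : g.2 = 0
  · simp [hg0]
  have hg0' : g.1 ≠ 0 := fun h0 => hg0 (zero_right h (hG hg) h0)
  -- b and c in the same position w.r.t. the roots
  have hroot : ∀ w, g.2.eval w = 0 → (w < b ↔ w < c) ∧ (b < w ↔ c < w) := by
    intro w hw
    obtain ⟨v, hv⟩ := root_mem h.swp (g := (g.2, g.1)) (hG hg) hg0 hw
    have hv' : (v, w) ∈ Z := hv
    have hs := h.2.2 v w (pos_of_mem h.2.1 hv') g (hG hg)
    rw [hw] at hs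
    have hv0 : g.1.eval v = 0 := by simpa using hs
    have e1 := hab (v, w) ⟨hv', g, hg, hg0', hv0⟩
    have e2 := hc (v, w) hv'
    simp only at e1 e2
    exact ⟨e1.1.symm.trans e2.1, e1.2.symm.trans e2.2⟩
  have hnr : ∀ u v : ℝ, (∀ w, g.2.eval w = 0 → (w < u ↔ w < v) ∧ (u < w ↔ v < w)) →
      u ≤ v → SignType.sign (g.2.eval u) = SignType.sign (g.2.eval v) := by
    intro u v hr huv
    rcases huv.eq_or_lt with rfl | hlt
    · rfl
    have hno : ∀ w ∈ Set.Icc u v, g.2.eval w ≠ 0 := by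
      intro w hw hw0
      have := hr w hw0
      have h1 : ¬ v < w := not_lt.2 hw.2
      have h2 : ¬ w < u := not_lt.2 hw.1
      have h3 : ¬ u < w := fun h => h1 (this.2.1 h)
      have h4 : ¬ w < v := fun h => h2 (this.1.2 h)
      have := hw.1; have := hw.2
      linarith [not_lt.1 h3, not_lt.1 h4]
    rcases lt_or_gt_of_ne (hno u ⟨le_rfl, huv⟩) with h1 | h1 <;>
      rcases lt_or_gt_of_ne (hno v ⟨huv, le_rfl⟩) with h2 | h2
    · rw [sign_neg h1, sign_neg h2]
    · obtain ⟨r, hr1, hr2, hr3⟩ := ivt_root g.2 hlt h1 h2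
      exact absurd hr3 (hno r ⟨hr1.le, hr2.le⟩)
    · obtain ⟨r, hr1, hr2, hr3⟩ := ivt_root (-g.2) hlt (by simpa using h1) (by simpa using h2)
      exact absurd (by simpa using hr3) (hno r ⟨hr1.le, hr2.le⟩)
    · rw [sign_pos h1, sign_pos h2]
  rcases le_total b c with hbc | hbc
  · exact (hnr b c hroot hbc).symm
  · exact hnr c b (fun w hw => ⟨(hroot w hw).1.symm, (hroot w hw).2.symm⟩) hbc

/-- the family of pairs of specialisations -/
def spec {A : Type*} [CommRing A] (f f' : A →+* ℝ) (L : Set (Polynomial A)) :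
    Set (Polynomial ℝ × Polynomial ℝ) := (fun P => (P.map f, P.map f')) '' L

/-- pseudo division -/
lemma pseudo_div {A : Type*} [CommRing A] (Q : Polynomial A) (hQ : 1 ≤ Q.natDegree) :
    ∀ (d : ℕ) (P : Polynomial A), P.natDegree < d + Q.natDegree →
    ∃ (e : ℕ) (a r : Polynomial A), Polynomial.C (Q.leadingCoeff ^ e) * P = a * Q + r ∧
      r.natDegree < Q.natDegree ∧ a.natDegree ≤ d - 1 := by
  intro d
  induction d with
  | zero => intro P hP; exact ⟨0, 0, P, by simp, by simpa using hP, by simp⟩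
  | succ d ih =>
    intro P hP
    by_cases hlt : P.natDegree < d + Q.natDegree
    · obtain ⟨e, a, r, h1, h2, h3⟩ := ih P hlt
      exact ⟨e, a, r, h1, h2, h3.trans (by omega)⟩
    have hPd : P.natDegree = d + Q.natDegree := by omega
    let P1 := Polynomial.C Q.leadingCoeff * P - Polynomial.C P.leadingCoeff * Polynomial.X ^ d * Q
    have hle : P1.natDegree ≤ d + Q.natDegree := by
      apply (Polynomial.natDegree_sub_le _ _).trans
      apply max_le
      · exact (Polynomial.natDegree_C_mul_le _ _).trans hPd.le
      · apply Polynomial.natDegree_mul_le.trans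
        have := Polynomial.natDegree_C_mul_X_pow_le P.leadingCoeff d
        omega
    have hco : P1.coeff (d + Q.natDegree) = 0 := by
      have e1 : (Polynomial.C P.leadingCoeff * Polynomial.X ^ d * Q).coeff (d + Q.natDegree)
          = P.leadingCoeff * Q.leadingCoeff := by
        rw [mul_assoc, Polynomial.coeff_C_mul, add_comm, Polynomial.coeff_X_pow_mul]
        rfl
      have e2 : P.coeff (d + Q.natDegree) = P.leadingCoeff := by rw [← hPd]; rfl
      simp only [P1, Polynomial.coeff_sub, e1, Polynomial.coeff_C_mul, e2]
      ring
    have hlt1 : P1.natDegree < d + Q.natDegree := by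
      rcases hle.lt_or_eq with h | h
      · exact h
      · rw [← h] at hco
        have : P1 = 0 := Polynomial.leadingCoeff_eq_zero.1 hco
        rw [this]; simp; omega
    obtain ⟨e, a, r, h1, h2, h3⟩ := ih P1 hlt1
    refine ⟨e + 1, a + Polynomial.C (Q.leadingCoeff ^ e) * (Polynomial.C P.leadingCoeff * Polynomial.X ^ d), r, ?_, h2, ?_⟩
    swap
    · refine (Polynomial.natDegree_add_le _ _).trans (max_le (h3.trans (by omega)) ?_)
      refine (Polynomial.natDegree_C_mul_le _ _).trans ?_
      exact Polynomial.natDegree_C_mul_X_pow_le P.leadingCoeff d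
    have : Polynomial.C (Q.leadingCoeff ^ (e+1)) * P = Polynomial.C (Q.leadingCoeff ^ e) * P1
        + Polynomial.C (Q.leadingCoeff ^ e) * (Polynomial.C P.leadingCoeff * Polynomial.X ^ d) * Q := by
      simp only [P1, pow_succ, Polynomial.C_mul]
      ring
    rw [this, h1]
    ring

lemma exists_prem {A : Type*} [CommRing A] (P Q : Polynomial A) :
    ∃ r : Polynomial A, r.natDegree ≤ Q.natDegree - 1 ∧ (1 ≤ Q.natDegree →
      ∃ (e : ℕ) (a : Polynomial A), Polynomial.C (Q.leadingCoeff ^ (2 * e)) * P = a * Q + r) := by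
  by_cases hQ : 1 ≤ Q.natDegree
  · obtain ⟨e, a, r, h1, h2, -⟩ := pseudo_div Q hQ (P.natDegree + 1) P (by omega)
    refine ⟨Polynomial.C (Q.leadingCoeff ^ e) * r, ?_, fun _ =>
      ⟨e, Polynomial.C (Q.leadingCoeff ^ e) * a, ?_⟩⟩
    · have := Polynomial.natDegree_C_mul_le (Q.leadingCoeff ^ e) r
      omega
    · rw [two_mul, pow_add, Polynomial.C_mul, mul_assoc, h1]
      ring
  · exact ⟨0, by simp, fun h => absurd h hQ⟩

/-- truncation -/
noncomputable def trunc {A : Type*} [CommRing A] (Q : Polynomial A) (i : ℕ) : Polynomial A :=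
  ∑ j ∈ Finset.range (i + 1), Polynomial.monomial j (Q.coeff j)

lemma trunc_coeff {A : Type*} [CommRing A] (Q : Polynomial A) (i j : ℕ) :
    (trunc Q i).coeff j = if j ≤ i then Q.coeff j else 0 := by
  simp only [trunc, Polynomial.finsetSum_coeff, Polynomial.coeff_monomial]
  rw [Finset.sum_ite_eq' (Finset.range (i+1)) j]
  simp [Nat.lt_succ_iff]

lemma trunc_natDegree_le {A : Type*} [CommRing A] (Q : Polynomial A) (i : ℕ) :
    (trunc Q i).natDegree ≤ i := by
  rw [Polynomial.natDegree_le_iff_coeff_eq_zero]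
  intro N hN
  rw [trunc_coeff, if_neg (by omega)]

/-- sign determination conclusion -/
def Concl {A X : Type*} [CommRing A] (ev : X → A →+* ℝ) (L : Set (Polynomial A)) : Prop :=
  ∃ Φ : Set A, Φ.Finite ∧ ∀ x x', (∀ φ ∈ Φ, SignType.sign (ev x φ) = SignType.sign (ev x' φ)) →
    ∃ Z, Good Z (spec (ev x) (ev x') L)

lemma Good.mono {Z G G'} (h : Good Z G) (hG : G' ⊆ G) : Good Z G' :=
  ⟨h.1, h.2.1, fun a b hab g hg => h.2.2 a b hab g (hG hg)⟩

lemma spec_mono {A : Type*} [CommRing A] (f f' : A →+* ℝ) {L L' : Set (Polynomial A)} (h : L ⊆ L') :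
    spec f f' L ⊆ spec f f' L' := Set.image_mono h

lemma Concl.mono {A X : Type*} [CommRing A] {ev : X → A →+* ℝ} {L L' : Set (Polynomial A)}
    (h : Concl ev L) (hL : L' ⊆ L) : Concl ev L' := by
  obtain ⟨Φ, hΦ, h⟩ := h
  refine ⟨Φ, hΦ, fun x x' hx => ?_⟩
  obtain ⟨Z, hZ⟩ := h x x' hx
  exact ⟨Z, hZ.mono (spec_mono _ _ hL)⟩

lemma concl_const {A X : Type*} [CommRing A] (ev : X → A →+* ℝ) (L : Set (Polynomial A))
    (hL : L.Finite) (hd : ∀ P ∈ L, P.natDegree < 1) : Concl ev L := by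
  refine ⟨(fun P => P.coeff 0) '' L, hL.image _, fun x x' hx => ⟨∅, Set.finite_empty, ?_, ?_⟩⟩
  · intro p hp; exact hp.elim
  · rintro a b - g ⟨P, hP, rfl⟩
    have : P = Polynomial.C (P.coeff 0) :=
      Polynomial.eq_C_of_natDegree_eq_zero (by have := hd P hP; omega)
    have h2 := hx _ ⟨P, hP, rfl⟩
    rw [this]
    simpa using h2

lemma concl_step {A X : Type*} [CommRing A] (ev : X → A →+* ℝ) (d : ℕ) (hd : 1 ≤ d)
    (P : Polynomial A) (hP : P.natDegree ≤ d) (U V : Set (Polynomial A)) (hUf : U.Finite)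
    (hVf : V.Finite) (hU : ∀ Q ∈ U, Q.natDegree ≤ d) (hV : ∀ Q ∈ V, Q.natDegree < d)
    (ih : ∀ V' : Set (Polynomial A), V'.Finite → (∀ Q ∈ V', Q.natDegree < d) → Concl ev (U ∪ V')) :
    Concl ev (insert P U ∪ V) := by
  classical
  choose prem hprem using fun Q => exists_prem P Q
  let W : Set (Polynomial A) := U ∪ V ∪ {P.derivative}
  have hWf : W.Finite := (hUf.union hVf).union (Set.finite_singleton _)
  have hPd : P.derivative.natDegree < d := by
    have := Polynomial.natDegree_derivative_le P
    omega
  have hWd : ∀ Q ∈ W, Q.natDegree ≤ d := by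
    rintro Q ((hQ | hQ) | hQ)
    · exact hU Q hQ
    · exact (hV Q hQ).le
    · rw [hQ]; exact hPd.le
  let K1 : Set (Polynomial A) := ⋃ Q ∈ W ∪ {P}, ⋃ i ∈ Set.Iic d, {Polynomial.C (Q.coeff i)}
  let K2 : Set (Polynomial A) := ⋃ Q ∈ W, ⋃ i ∈ Set.Iic d, {prem (trunc Q i)}
  have hK1 : K1.Finite := (hWf.union (Set.finite_singleton _)).biUnion
    fun Q _ => (Set.finite_Iic d).biUnion fun i _ => Set.finite_singleton _
  have hK2 : K2.Finite := hWf.biUnion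
    fun Q _ => (Set.finite_Iic d).biUnion fun i _ => Set.finite_singleton _
  let V' := V ∪ {P.derivative} ∪ K1 ∪ K2
  have hV'f : V'.Finite := ((hVf.union (Set.finite_singleton _)).union hK1).union hK2
  obtain ⟨Φ, hΦ, hmain⟩ := ih V' hV'f (by
    rintro Q (((hQ | hQ) | hQ) | hQ)
    · exact hV Q hQ
    · rw [hQ]; exact hPd
    · simp only [K1, Set.mem_iUnion, Set.mem_singleton_iff] at hQ
      obtain ⟨R, -, i, -, rfl⟩ := hQ
      rw [Polynomial.natDegree_C]; omega
    · simp only [K2, Set.mem_iUnion, Set.mem_singleton_iff] at hQ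
      obtain ⟨R, -, i, hi, rfl⟩ := hQ
      have h1 := (hprem (trunc R i)).1
      have h2 := trunc_natDegree_le R i
      have h3 : i ≤ d := hi
      omega)
  refine ⟨Φ, hΦ, fun x x' hx => ?_⟩
  obtain ⟨Z, hZ⟩ := hmain x x' hx
  -- signs of coefficients
  have hcoef : ∀ Q ∈ W ∪ {P}, ∀ i, i ≤ d →
      SignType.sign (ev x (Q.coeff i)) = SignType.sign (ev x' (Q.coeff i)) := by
    intro Q hQ i hi
    obtain ⟨b, hb⟩ := exists_pos hZ.1 hZ.2.1 0
    have hmem : Polynomial.C (Q.coeff i) ∈ U ∪ V' := by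
      refine Or.inr (Or.inl (Or.inr ?_))
      simp only [K1, Set.mem_iUnion, Set.mem_singleton_iff]
      exact ⟨Q, hQ, i, hi, rfl⟩
    have := hZ.2.2 0 b hb _ ⟨_, hmem, rfl⟩
    simpa using this
  have hWsub : W ⊆ U ∪ V' := by
    rintro Q ((hQ | hQ) | hQ)
    · exact Or.inl hQ
    · exact Or.inr (Or.inl (Or.inl (Or.inl hQ)))
    · exact Or.inr (Or.inl (Or.inl (Or.inr hQ)))
  have hZ1 := restrict hZ (spec_mono (ev x) (ev x') hWsub)
  set Z1 := {p ∈ Z | ∃ g ∈ spec (ev x) (ev x') W, g.1 ≠ 0 ∧ g.1.eval p.1 = 0} with hZ1def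
  -- sign of P on Z1
  have hZP : ∀ p ∈ Z1, SignType.sign ((P.map (ev x)).eval p.1) =
      SignType.sign ((P.map (ev x')).eval p.2) := by
    rintro p ⟨hpZ, g, ⟨Q, hQ, rfl⟩, hg0, hgp⟩
    simp only at hg0 hgp
    set i := (Q.map (ev x)).natDegree with hi
    have hid : i ≤ d := Polynomial.natDegree_map_le.trans (hWd Q hQ)
    have hc0 : ev x (Q.coeff i) ≠ 0 := by
      have : (Q.map (ev x)).leadingCoeff ≠ 0 := Polynomial.leadingCoeff_ne_zero.2 hg0
      rwa [Polynomial.leadingCoeff, Polynomial.coeff_map] at this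
    have hc0' : ev x' (Q.coeff i) ≠ 0 := by
      have := hcoef Q (Or.inl hQ) i hid
      intro h0
      rw [h0, sign_zero, sign_eq_zero_iff] at this
      exact hc0 this
    have hQc : Q.coeff i ≠ 0 := fun h0 => hc0 (by rw [h0, map_zero])
    have htd : (trunc Q i).natDegree = i := by
      apply le_antisymm (trunc_natDegree_le Q i)
      apply Polynomial.le_natDegree_of_ne_zero
      rw [trunc_coeff, if_pos le_rfl]; exact hQc
    have htl : (trunc Q i).leadingCoeff = Q.coeff i := by
      rw [Polynomial.leadingCoeff, htd, trunc_coeff, if_pos le_rfl]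
    have htx : (trunc Q i).map (ev x) = Q.map (ev x) := by
      ext j
      rw [Polynomial.coeff_map, trunc_coeff]
      split_ifs with hj
      · rw [Polynomial.coeff_map]
      · rw [map_zero, Polynomial.coeff_eq_zero_of_natDegree_lt (by omega)]
    have htx' : (trunc Q i).map (ev x') = Q.map (ev x') := by
      ext j
      rw [Polynomial.coeff_map, trunc_coeff]
      split_ifs with hj
      · rw [Polynomial.coeff_map]
      · rw [map_zero, Polynomial.coeff_map]
        by_cases hjd : j ≤ d
        · have h1 := hcoef Q (Or.inl hQ) j hjd
          have h2 : (Q.map (ev x)).coeff j = 0 :=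
            Polynomial.coeff_eq_zero_of_natDegree_lt (by omega)
          rw [Polynomial.coeff_map] at h2
          rw [h2, sign_zero] at h1
          exact (sign_eq_zero_iff.1 h1.symm).symm
        · rw [Polynomial.coeff_eq_zero_of_natDegree_lt (by have := hWd Q hQ; omega), map_zero]
    have hi1 : 1 ≤ i := by
      by_contra hcon
      have : i = 0 := by omega
      have h3 := Polynomial.eq_C_of_natDegree_eq_zero (hi.symm.trans this)
      rw [h3, Polynomial.eval_C] at hgp
      rw [h3, hgp] at hg0
      simp at hg0
    obtain ⟨e, a, hea⟩ := (hprem (trunc Q i)).2 (by omega)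
    rw [htl] at hea
    have hpos := pos_of_mem hZ.2.1 hpZ
    have hroot' : (Q.map (ev x')).eval p.2 = 0 := by
      have := hZ.2.2 _ _ hpos _ ⟨Q, hWsub hQ, rfl⟩
      simp only at this
      rw [hgp, sign_zero] at this
      exact sign_eq_zero_iff.1 this.symm
    have hr := hZ.2.2 _ _ hpos (_, _) ⟨prem (trunc Q i), Or.inr (Or.inr (by
      simp only [K2, Set.mem_iUnion, Set.mem_singleton_iff]
      exact ⟨Q, hQ, i, hid, rfl⟩)), rfl⟩
    simp only at hr
    have key : ∀ y t, (Q.map (ev y)).eval t = 0 → (trunc Q i).map (ev y) = Q.map (ev y) →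
        ev y (Q.coeff i) ≠ 0 → SignType.sign ((P.map (ev y)).eval t) =
        SignType.sign (((prem (trunc Q i)).map (ev y)).eval t) := by
      intro y t h1 h2 h3
      have h4 := congrArg (fun R => (R.map (ev y)).eval t) hea
      simp only [Polynomial.map_mul, Polynomial.map_add, Polynomial.map_C, Polynomial.eval_mul,
        Polynomial.eval_add, Polynomial.eval_C, h2, h1, mul_zero, zero_add] at h4
      rw [map_pow] at h4
      have h5 : 0 < (ev y) (Q.coeff i) ^ (2 * e) := by rw [pow_mul]; positivity
      rw [← h4, sign_mul, sign_pos h5, one_mul]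
    rw [key x p.1 hgp htx hc0, hr, key x' p.2 hroot' htx' hc0']
  have hsub : insert P U ∪ V ⊆ insert P W := by
    rintro Q ((hQ | hQ) | hQ)
    · exact Or.inl hQ
    · exact Or.inr (Or.inl (Or.inl hQ))
    · exact Or.inr (Or.inl (Or.inr hQ))
  have hins : spec (ev x) (ev x') (insert P W) =
      insert (P.map (ev x), P.map (ev x')) (spec (ev x) (ev x') W) := Set.image_insert_eq
  suffices h : ∃ Z', Good Z' (spec (ev x) (ev x') (insert P W)) by
    obtain ⟨Z', hZ'⟩ := h
    exact ⟨Z', hZ'.mono (spec_mono _ _ hsub)⟩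
  rw [hins]
  have hder : ((P.map (ev x)).derivative, (P.map (ev x')).derivative) ∈ spec (ev x) (ev x') W :=
    ⟨P.derivative, Or.inr rfl, by simp only [Polynomial.derivative_map]⟩
  by_cases h0 : (P.map (ev x)).derivative = 0
  · have h0' := zero_right hZ1 hder h0
    simp only at h0'
    refine ⟨Z1, hZ1.1, hZ1.2.1, ?_⟩
    rintro a b hab g (rfl | hg)
    · have e1 := Polynomial.eq_C_of_natDegree_eq_zero (Polynomial.derivative_eq_zero.1 h0)
      have e2 := Polynomial.eq_C_of_natDegree_eq_zero (Polynomial.derivative_eq_zero.1 h0')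
      simp only
      rw [e1, e2]
      simp only [Polynomial.eval_C, Polynomial.coeff_map]
      exact hcoef P (Or.inr rfl) 0 (Nat.zero_le _)
    · exact hZ1.2.2 a b hab g hg
  · exact step hZ1 hder h0 hZP

lemma concl_all {A X : Type*} [CommRing A] (ev : X → A →+* ℝ) (d : ℕ) :
    ∀ L : Set (Polynomial A), L.Finite → (∀ P ∈ L, P.natDegree < d + 1) → Concl ev L := by
  induction d with
  | zero => intro L hL h; exact concl_const ev L hL (by simpa using h)
  | succ d ih =>
    intro L hL hd
    have : ∀ U : Set (Polynomial A), U.Finite → (∀ Q ∈ U, Q.natDegree ≤ d + 1) →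
        ∀ V : Set (Polynomial A), V.Finite → (∀ Q ∈ V, Q.natDegree < d + 1) → Concl ev (U ∪ V) := by
      intro U hU
      induction U, hU using Set.Finite.induction_on with
      | empty => intro _ V hV hVd; rw [Set.empty_union]; exact ih V hV hVd
      | @insert P U hPU hUf ihU =>
        intro hUd V hV hVd
        have hU' : ∀ Q ∈ U, Q.natDegree ≤ d + 1 := fun Q hQ => hUd Q (Or.inr hQ)
        exact concl_step ev (d + 1) (by omega) P (hUd P (Or.inl rfl)) U V hUf hV hU' hVd (ihU hU')
    have := this L hL (fun Q hQ => by have := hd Q hQ; omega) ∅ Set.finite_empty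
      (fun Q hQ => hQ.elim)
    rwa [Set.union_empty] at this

/-- sign-determined sets -/
def SD {A X : Type*} [CommRing A] (ev : X → A →+* ℝ) (S : Set X) : Prop :=
  ∃ Φ : Set A, Φ.Finite ∧ ∀ x x', (∀ φ ∈ Φ, SignType.sign (ev x φ) = SignType.sign (ev x' φ)) →
    x ∈ S → x' ∈ S

/-- **Tarski-Seidenberg**, one variable projection -/
lemma SD.proj {A X : Type*} [CommRing A] (ev : X → A →+* ℝ) (S : Set (X × ℝ))
    (h : SD (fun p : X × ℝ => Polynomial.eval₂RingHom (ev p.1) p.2) S) :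
    SD ev {x | ∃ t, (x, t) ∈ S} := by
  obtain ⟨L, hL, h⟩ := h
  obtain ⟨D, hD⟩ : ∃ D, ∀ P ∈ L, P.natDegree < D + 1 := by
    obtain ⟨D, hD⟩ := (hL.image Polynomial.natDegree).bddAbove
    exact ⟨D, fun P hP => Nat.lt_succ_of_le (hD ⟨P, hP, rfl⟩)⟩
  obtain ⟨Φ, hΦ, hmain⟩ := concl_all ev D L hL hD
  refine ⟨Φ, hΦ, fun x x' hx => ?_⟩
  rintro ⟨t, ht⟩
  obtain ⟨Z, hZ⟩ := hmain x x' hx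
  obtain ⟨t', ht'⟩ := exists_pos hZ.1 hZ.2.1 t
  refine ⟨t', h (x, t) (x', t') (fun P hP => ?_) ht⟩
  have := hZ.2.2 t t' ht' _ ⟨P, hP, rfl⟩
  simpa [Polynomial.eval₂_eq_eval_map] using this

/-- Tarski-Seidenberg, projection along `ℝⁿ` -/
lemma SD.projN {A X : Type*} [CommRing A] (ev : X → A →+* ℝ) (n : ℕ) :
    ∀ (S : Set (X × (Fin n → ℝ))),
    SD (fun p : X × (Fin n → ℝ) => MvPolynomial.eval₂Hom (ev p.1) p.2) S →
    SD ev {x | ∃ t, (x, t) ∈ S} := by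
  induction n with
  | zero =>
    rintro S ⟨Φ, hΦ, h⟩
    refine ⟨MvPolynomial.constantCoeff '' Φ, hΦ.image _, ?_⟩
    rintro x x' hx ⟨t, ht⟩
    refine ⟨t, h (x, t) (x', t) (fun φ hφ => ?_) ht⟩
    have := hx _ ⟨φ, hφ, rfl⟩
    obtain ⟨a, rfl⟩ := MvPolynomial.C_surjective (Fin 0) φ
    simpa only [MvPolynomial.constantCoeff_C, MvPolynomial.coe_eval₂Hom,
      MvPolynomial.eval₂_C] using this
  | succ n ih =>
    rintro S ⟨Φ, hΦ, h⟩
    have h1 : SD (fun p : (X × (Fin n → ℝ)) × ℝ => Polynomial.eval₂RingHom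
        (MvPolynomial.eval₂Hom (ev p.1.1) p.1.2) p.2)
        {p | (p.1.1, (Fin.cons p.2 p.1.2 : Fin (n+1) → ℝ)) ∈ S} := by
      refine ⟨(MvPolynomial.finSuccEquiv A n) '' Φ, hΦ.image _, ?_⟩
      rintro p p' hp hpS
      have key : ∀ (q : (X × (Fin n → ℝ)) × ℝ) (φ : MvPolynomial (Fin (n+1)) A),
          Polynomial.eval₂RingHom (MvPolynomial.eval₂Hom (ev q.1.1) q.1.2) q.2
            (MvPolynomial.finSuccEquiv A n φ) =
          MvPolynomial.eval₂Hom (ev q.1.1) (Fin.cons q.2 q.1.2 : Fin (n+1) → ℝ) φ := by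
        intro q φ
        induction φ using MvPolynomial.induction_on with
        | C a => simp [MvPolynomial.finSuccEquiv_apply]
        | add p q hp hq => simp only [map_add, hp, hq]
        | mul_X p i hp =>
          rw [map_mul, map_mul, map_mul, hp]
          congr 1
          refine Fin.cases ?_ (fun j => ?_) i
          · simp [MvPolynomial.finSuccEquiv_X_zero]
          · simp [MvPolynomial.finSuccEquiv_X_succ]
      refine h _ _ (fun φ hφ => ?_) hpS
      have := hp _ ⟨φ, hφ, rfl⟩
      rw [key, key] at this
      exact this
    have h2 := ih _ (SD.proj (fun p : X × (Fin n → ℝ) => MvPolynomial.eval₂Hom (ev p.1) p.2) _ h1)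
    obtain ⟨Ψ, hΨ, h3⟩ := h2
    refine ⟨Ψ, hΨ, fun x x' hx hxS => ?_⟩
    obtain ⟨t, ht⟩ := hxS
    obtain ⟨u, v, huv⟩ := h3 x x' hx ⟨Fin.tail t, t 0, by
      simpa using ht⟩
    exact ⟨_, huv⟩

lemma dense_ne {n : ℕ} (q : MvPolynomial (Fin n) ℝ) (hq : q ≠ 0) :
    Dense {x : Fin n → ℝ | eval x q ≠ 0} := by
  rw [dense_iff_inter_open]
  rintro U hU ⟨a, ha⟩
  obtain ⟨ε, hε, hb⟩ := Metric.isOpen_iff.1 hU a ha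
  by_contra hcon
  apply hq
  apply MvPolynomial.funext_set (fun i => Metric.ball (a i) ε)
  · intro i
    rw [Real.ball_eq_Ioo]
    exact Set.Ioo_infinite (by linarith)
  · intro x hx
    rw [map_zero]
    by_contra h
    refine hcon ⟨x, hb ?_, h⟩
    rw [← ball_pi a hε] at *
    exact hx

lemma poly_upper (a : Polynomial ℝ) : ∃ m : ℕ, ∀ᶠ s in Filter.atTop, |a.eval s| ≤ s ^ m := by
  refine ⟨a.natDegree + 1, ?_⟩
  have h := Polynomial.div_tendsto_atTop_zero_of_degree_lt a (Polynomial.X ^ (a.natDegree + 1)) (by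
    rw [Polynomial.degree_X_pow]
    exact lt_of_le_of_lt Polynomial.degree_le_natDegree (by exact_mod_cast Nat.lt_succ_self _))
  have h2 := h.abs.eventually (gt_mem_nhds (show |(0:ℝ)| < 1 by simp))
  filter_upwards [h2, Filter.eventually_gt_atTop 0] with s hs hs0
  simp only [Polynomial.eval_pow, Polynomial.eval_X, abs_div] at hs
  have hp : 0 < s ^ (a.natDegree + 1) := by positivity
  rw [abs_of_pos hp, div_lt_one hp] at hs
  exact hs.le

lemma poly_lower (a : Polynomial ℝ) (ha : a ≠ 0) : ∀ᶠ s in Filter.atTop, 1 ≤ s * |a.eval s| := by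
  have h := Polynomial.div_tendsto_atTop_zero_of_degree_lt (Polynomial.C 1) (Polynomial.X * a) (by
    rw [Polynomial.degree_mul, Polynomial.degree_X, Polynomial.degree_C one_ne_zero,
      Polynomial.degree_eq_natDegree ha]
    norm_cast; omega)
  have h2 := h.abs.eventually (gt_mem_nhds (show |(0:ℝ)| < 1 by simp))
  have h3 := Polynomial.eventually_atTop_not_isRoot a ha
  filter_upwards [h2, h3, Filter.eventually_gt_atTop 0] with s hs hs1 hs0
  have h4 : 0 < |a.eval s| := abs_pos.2 hs1
  simp only [Polynomial.eval_C, Polynomial.eval_mul, Polynomial.eval_X, abs_div, abs_mul, abs_one,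
    abs_of_pos hs0] at hs
  rw [div_lt_one (by positivity)] at hs
  exact hs.le

/-- evaluation of two-variable polynomials -/
noncomputable def ev2 (p : ℝ × ℝ) : Polynomial (Polynomial ℝ) →+* ℝ :=
  Polynomial.eval₂RingHom (Polynomial.evalRingHom p.1) p.2

lemma sign_eventually (φ : Polynomial (Polynomial ℝ)) :
    ∃ M : ℕ, ∀ᶠ s in Filter.atTop, ∀ z : ℝ, s ^ M ≤ z →
      SignType.sign (ev2 (s, z) φ) = SignType.sign (φ.leadingCoeff.eval s) := by
  by_cases hφ : φ = 0
  · subst hφ; exact ⟨0, by simp⟩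
  choose m hm using fun j => poly_upper (φ.coeff j)
  set D := φ.natDegree with hD
  let m0 := (Finset.range D).sup m
  have hall : ∀ᶠ s in Filter.atTop, ∀ j ∈ Finset.range D, |(φ.coeff j).eval s| ≤ s ^ (m j) :=
    (Filter.eventually_all_finset (Finset.range D)).2 (fun j _ => hm j)
  refine ⟨m0 + 2, ?_⟩
  filter_upwards [hall, poly_lower φ.leadingCoeff (Polynomial.leadingCoeff_ne_zero.2 hφ),
    Filter.eventually_ge_atTop 1, Filter.eventually_gt_atTop (D : ℝ)] with s h1 h2 h3 h4 z hz
  have hs0 : 0 < s := by linarith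
  have hz1 : 1 ≤ z := le_trans (one_le_pow₀ h3) hz
  have hz0 : 0 < z := by linarith
  have e1 : ev2 (s, z) φ = (∑ j ∈ Finset.range D, (φ.coeff j).eval s * z ^ j) +
      φ.leadingCoeff.eval s * z ^ D := by
    simp only [ev2, Polynomial.coe_eval₂RingHom, Polynomial.eval₂_eq_sum_range,
      Finset.sum_range_succ, Polynomial.coe_evalRingHom]
    rfl
  set R := ∑ j ∈ Finset.range D, (φ.coeff j).eval s * z ^ j with hR
  set l := φ.leadingCoeff.eval s with hl
  have e2 : |R| < |l| * z ^ D := by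
    rcases Nat.eq_zero_or_pos D with h0 | h0
    · rw [hR, h0]
      simp
      intro h
      rw [h] at h2; simp at h2; linarith
    have e3 : |R| ≤ ∑ j ∈ Finset.range D, s ^ m0 * z ^ (D - 1) := by
      refine (Finset.abs_sum_le_sum_abs _ _).trans (Finset.sum_le_sum fun j hj => ?_)
      rw [abs_mul, abs_of_pos (pow_pos hz0 j)]
      apply mul_le_mul ((h1 j hj).trans (pow_le_pow_right₀ h3 (Finset.le_sup hj)))
        (pow_le_pow_right₀ hz1 (by have := Finset.mem_range.1 hj; omega)) (by positivity)
        (by positivity)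
    rw [Finset.sum_const, Finset.card_range, nsmul_eq_mul] at e3
    have e4 : s * ((D:ℝ) * (s ^ m0 * z ^ (D - 1))) < s * (|l| * z ^ D) := by
      have hDz : z ^ D = z * z ^ (D - 1) := by rw [← pow_succ']; congr 1; omega
      calc s * ((D:ℝ) * (s ^ m0 * z ^ (D - 1))) < s * (s * (s ^ m0 * z ^ (D - 1))) := by gcongr
        _ = s ^ (m0 + 2) * z ^ (D - 1) := by ring
        _ ≤ z * z ^ (D - 1) := by gcongr
        _ = 1 * z ^ D := by rw [hDz, one_mul]
        _ ≤ (s * |l|) * z ^ D := by gcongr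
        _ = _ := by ring
    exact lt_of_le_of_lt e3 (lt_of_mul_lt_mul_left e4 hs0.le)
  have hzD : 0 < z ^ D := by positivity
  rw [e1]
  rcases lt_trichotomy l 0 with h | h | h
  · rw [sign_neg h, sign_neg]
    rw [abs_of_neg h] at e2
    have := le_abs_self R
    nlinarith
  · rw [h] at h2; simp at h2; linarith
  · rw [sign_pos h, sign_pos]
    rw [abs_of_pos h] at e2
    have := neg_abs_le R
    nlinarith

lemma sign_eventually' (Φ : Set (Polynomial (Polynomial ℝ))) (hΦ : Φ.Finite) :
    ∃ M : ℕ, ∀ᶠ s in Filter.atTop, ∀ φ ∈ Φ, ∀ z z' : ℝ, s ^ M ≤ z → s ^ M ≤ z' →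
      SignType.sign (ev2 (s, z) φ) = SignType.sign (ev2 (s, z') φ) := by
  choose m hm using sign_eventually
  obtain ⟨M, hM⟩ := (hΦ.image m).bddAbove
  refine ⟨M, ?_⟩
  have := (Filter.eventually_all_finite hΦ).2 (fun φ _ => hm φ)
  filter_upwards [this, Filter.eventually_ge_atTop 1] with s hs hs1 φ hφ z z' hz hz'
  have h1 : s ^ m φ ≤ s ^ M := pow_le_pow_right₀ hs1 (hM ⟨φ, hφ, rfl⟩)
  rw [hs φ hφ z (h1.trans hz), hs φ hφ z' (h1.trans hz')]

lemma loj_global {n : ℕ} (f g : (Fin n → ℝ) → ℝ) (hf : Continuous f) (hg : Continuous g)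
    (p r q : MvPolynomial (Fin n) ℝ) (hq : q ≠ 0) (hp : ∀ x, eval x q * f x = eval x p)
    (hr : ∀ x, eval x q * g x = eval x r) (hZ : ∀ x, g x = 0 → f x = 0) :
    ∃ M : ℕ, ∀ᶠ s in Filter.atTop, ∀ x : Fin n → ℝ, ∑ i, x i ^ 2 < s → 1 < s * |f x| →
      1 ≤ s ^ M * |g x| := by
  let ι : ℝ →+* Polynomial (Polynomial ℝ) := Polynomial.C.comp Polynomial.C
  have hι : ∀ a, (ev2 a).comp ι = RingHom.id ℝ := by
    intro a; ext c; simp [ev2, ι]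
  let S : Set ((ℝ × ℝ) × (Fin n → ℝ)) := {y | eval y.2 q ≠ 0 ∧ ∑ i, y.2 i ^ 2 < y.1.1 ∧
    0 < y.1.1 ^ 2 * eval y.2 p ^ 2 - eval y.2 q ^ 2 ∧
    0 < eval y.2 q ^ 2 - y.1.2 ^ 2 * eval y.2 r ^ 2}
  let σ : MvPolynomial (Fin n) (Polynomial (Polynomial ℝ)) :=
    MvPolynomial.C (Polynomial.C Polynomial.X)
  let ζ : MvPolynomial (Fin n) (Polynomial (Polynomial ℝ)) := MvPolynomial.C Polynomial.X
  have hlift : ∀ (y : (ℝ × ℝ) × (Fin n → ℝ)) (u : MvPolynomial (Fin n) ℝ),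
      MvPolynomial.eval₂Hom (ev2 y.1) y.2 (MvPolynomial.map ι u) = eval y.2 u := by
    intro y u
    rw [MvPolynomial.coe_eval₂Hom, MvPolynomial.eval₂_map, hι]; rfl
  have hσ : ∀ (y : (ℝ × ℝ) × (Fin n → ℝ)), MvPolynomial.eval₂Hom (ev2 y.1) y.2 σ = y.1.1 := by
    intro y; simp [σ, ev2]
  have hζ : ∀ (y : (ℝ × ℝ) × (Fin n → ℝ)), MvPolynomial.eval₂Hom (ev2 y.1) y.2 ζ = y.1.2 := by
    intro y; simp [ζ, ev2]
  have hSD : SD (A := MvPolynomial (Fin n) (Polynomial (Polynomial ℝ))) (fun y : (ℝ × ℝ) × (Fin n → ℝ) => MvPolynomial.eval₂Hom (ev2 y.1) y.2) S := by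
    refine ⟨{MvPolynomial.map ι q, σ - ∑ i, MvPolynomial.X i ^ 2,
      σ ^ 2 * MvPolynomial.map ι p ^ 2 - MvPolynomial.map ι q ^ 2,
      MvPolynomial.map ι q ^ 2 - ζ ^ 2 * MvPolynomial.map ι r ^ 2}, by simp, ?_⟩
    intro y y' h hy
    simp only [Set.mem_insert_iff, Set.mem_singleton_iff, forall_eq_or_imp, forall_eq, map_sub,
      map_mul, map_pow, map_sum, hlift, hσ, hζ, MvPolynomial.eval₂Hom_X'] at h
    obtain ⟨h1, h2, h3, h4⟩ := h
    obtain ⟨k1, k2, k3, k4⟩ := hy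
    refine ⟨?_, ?_, ?_, ?_⟩
    · intro h0; rw [h0, sign_zero, sign_eq_zero_iff] at h1; exact k1 h1
    · rw [sign_pos (sub_pos.2 k2)] at h2
      exact sub_pos.1 (sign_eq_one_iff.1 h2.symm)
    · rw [sign_pos k3] at h3; exact sign_eq_one_iff.1 h3.symm
    · rw [sign_pos k4] at h4; exact sign_eq_one_iff.1 h4.symm
  obtain ⟨Φ, hΦ, hT⟩ := SD.projN ev2 n S hSD
  obtain ⟨M, hM⟩ := sign_eventually' Φ hΦ
  refine ⟨M, ?_⟩
  filter_upwards [hM, Filter.eventually_ge_atTop 1] with s hs hs1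
  have hs0 : 0 < s := by linarith
  have c1 : Continuous (fun x : Fin n → ℝ => ∑ i, x i ^ 2) := by fun_prop
  have c2 : Continuous (fun x : Fin n → ℝ => s * |f x|) := by fun_prop
  -- boundedness
  have hbd : ∃ B : ℝ, ∀ x : Fin n → ℝ, ∑ i, x i ^ 2 < s → 1 < s * |f x| → 1 ≤ B * |g x| := by
    let K : Set (Fin n → ℝ) := {x | ∑ i, x i ^ 2 ≤ s} ∩ {x | 1 ≤ s * |f x|}
    have hKc : IsCompact K := by
      apply Metric.isCompact_of_isClosed_isBounded
      · exact (isClosed_le c1 continuous_const).inter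
          (isClosed_le continuous_const c2)
      · apply (Metric.isBounded_closedBall (x := (0 : Fin n → ℝ)) (r := s)).subset
        intro x hx
        rw [mem_closedBall_zero_iff, pi_norm_le_iff_of_nonneg hs0.le]
        intro i
        have := Finset.single_le_sum (f := fun i => x i ^ 2) (fun i _ => sq_nonneg (x i))
          (Finset.mem_univ i)
        have h2 : x i ^ 2 ≤ s ^ 2 := by
          have := this.trans hx.1
          nlinarith
        rw [Real.norm_eq_abs]
        exact abs_le_of_sq_le_sq h2 hs0.le
    have hK0 : ∀ x ∈ K, g x ≠ 0 := by
      intro x hx h0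
      have : 1 ≤ s * |f x| := hx.2
      rw [hZ x h0] at this
      simp at this; linarith
    rcases K.eq_empty_or_nonempty with he | hne
    · refine ⟨0, fun x h1 h2 => ?_⟩
      have : x ∈ K := ⟨h1.le, h2.le⟩
      rw [he] at this; exact this.elim
    · obtain ⟨x0, hx0, hmin⟩ := hKc.exists_isMinOn hne (hg.abs.continuousOn)
      refine ⟨|g x0|⁻¹, fun x h1 h2 => ?_⟩
      have h3 : |g x0| ≤ |g x| := hmin ⟨h1.le, h2.le⟩
      have h4 : 0 < |g x0| := abs_pos.2 (hK0 x0 hx0)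
      rw [inv_mul_eq_div, le_div_iff₀ h4, one_mul]; exact h3
  obtain ⟨B, hB⟩ := hbd
  have main : ∀ x : Fin n → ℝ, eval x q ≠ 0 → ∑ i, x i ^ 2 < s → 1 < s * |f x| →
      1 ≤ s ^ M * |g x| := by
    intro x hx h1 h2
    by_contra hcon
    push Not at hcon
    have hmem : ∀ z : ℝ, 0 ≤ z → ∀ y : Fin n → ℝ, ((s, z), y) ∈ S ↔
        (eval y q ≠ 0 ∧ ∑ i, y i ^ 2 < s ∧ 1 < s * |f y| ∧ z * |g y| < 1) := by
      intro z hz y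
      simp only [S, Set.mem_ofPred_eq]
      refine and_congr_right fun hqy => and_congr_right fun _ => ?_
      have hq2 : 0 < eval y q ^ 2 := by positivity
      rw [← hp, ← hr]
      have e1 : s ^ 2 * (eval y q * f y) ^ 2 - eval y q ^ 2 =
        eval y q ^ 2 * ((s * |f y|) ^ 2 - 1 ^ 2) := by rw [mul_pow s, sq_abs]; ring
      have e2 : eval y q ^ 2 - z ^ 2 * (eval y q * g y) ^ 2 =
        eval y q ^ 2 * (1 ^ 2 - (z * |g y|) ^ 2) := by rw [mul_pow z, sq_abs]; ring
      rw [e1, e2, mul_pos_iff_of_pos_left hq2, mul_pos_iff_of_pos_left hq2, sub_pos, sub_pos,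
        sq_lt_sq₀ (by positivity) (by positivity), sq_lt_sq₀ (by positivity) (by positivity)]
    have hin : (s, s ^ M) ∈ {a : ℝ × ℝ | ∃ t, (a, t) ∈ S} :=
      ⟨x, (hmem _ (by positivity) x).2 ⟨hx, h1, h2, hcon⟩⟩
    have hz0 : s ^ M ≤ max (s ^ M) B := le_max_left _ _
    have := hT (s, s ^ M) (s, max (s ^ M) B) (fun φ hφ => hs φ hφ _ _ le_rfl hz0) hin
    obtain ⟨y, hy⟩ := this
    have hpos : 0 < s ^ M := by positivity
    obtain ⟨_, k1, k2, k3⟩ := (hmem _ (hpos.le.trans hz0) y).1 hy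
    have k4 := hB y k1 k2
    have : B * |g y| ≤ max (s ^ M) B * |g y| := by gcongr; exact le_max_right _ _
    linarith
  intro x h1 h2
  have hop : IsOpen ({x : Fin n → ℝ | ∑ i, x i ^ 2 < s} ∩ {x | 1 < s * |f x|}) :=
    (isOpen_lt c1 continuous_const).inter (isOpen_lt continuous_const c2)
  have hcl : IsClosed {x : Fin n → ℝ | 1 ≤ s ^ M * |g x|} :=
    isClosed_le continuous_const (by fun_prop)
  have := (dense_ne q hq).open_subset_closure_inter hop ⟨h1, h2⟩
  exact hcl.closure_subset_iff.2 (fun y hy => main y hy.2 hy.1.1 hy.1.2) this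

/-- local Lojasiewicz inequality with uniform exponent -/
lemma loj_local {n : ℕ} (f g : (Fin n → ℝ) → ℝ) (hf : Continuous f) (hg : Continuous g)
    (p r q : MvPolynomial (Fin n) ℝ) (hq : q ≠ 0) (hp : ∀ x, eval x q * f x = eval x p)
    (hr : ∀ x, eval x q * g x = eval x r) (hZ : ∀ x, g x = 0 → f x = 0) :
    ∃ M : ℕ, ∀ x0, ∃ C : ℝ, ∀ᶠ x in nhds x0, |f x| ^ M ≤ C * |g x| := by
  obtain ⟨M, hM⟩ := loj_global f g hf hg p r q hq hp hr hZ
  obtain ⟨s0, hs0⟩ := Filter.eventually_atTop.1 hM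
  refine ⟨M + 1, fun x0 => ?_⟩
  let N : (Fin n → ℝ) → ℝ := fun x => ∑ i, x i ^ 2
  have hN : Continuous N := by fun_prop
  set K := N x0 + 1
  set F := |f x0| + 1
  have h1 : ∀ᶠ x in nhds x0, N x < K := hN.continuousAt.eventually (gt_mem_nhds (lt_add_one _))
  have h2 : ∀ᶠ x in nhds x0, |f x| < F := hf.abs.continuousAt.eventually (gt_mem_nhds (lt_add_one _))
  set s1 := |s0| + K + 1
  have hK : 0 < K := by
    have : 0 ≤ N x0 := Finset.sum_nonneg fun i _ => sq_nonneg _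
    linarith
  refine ⟨(s1 * F + 2) ^ (M + 1), ?_⟩
  filter_upwards [h1, h2] with x k1 k2
  have hs1 : 1 ≤ s1 := by have := abs_nonneg s0; simp only [s1]; linarith
  have hF : 0 < F := (abs_nonneg _).trans_lt k2
  by_cases hfx : f x = 0
  · rw [hfx, abs_zero, zero_pow (by omega)]; positivity
  have hfp : 0 < |f x| := abs_pos.2 hfx
  set s := s1 + 2 / |f x| with hs
  have hdp : 0 < 2 / |f x| := by positivity
  have hsf : s * |f x| = s1 * |f x| + 2 := by rw [hs, add_mul, div_mul_cancel₀ _ hfp.ne']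
  have hss : s0 ≤ s := by have := le_abs_self s0; simp only [hs, s1]; linarith
  have k3 := hs0 s hss x (by have := abs_nonneg s0; simp only [hs, s1]; linarith) (by
    rw [hsf]; nlinarith)
  have hs1' : 1 ≤ s := by linarith
  have k4 : 1 ≤ s ^ (M + 1) * |g x| := k3.trans (by gcongr; · omega)
  calc |f x| ^ (M + 1) = |f x| ^ (M + 1) * 1 := (mul_one _).symm
    _ ≤ |f x| ^ (M + 1) * (s ^ (M + 1) * |g x|) := by gcongr
    _ = (s * |f x|) ^ (M + 1) * |g x| := by rw [mul_pow]; ring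
    _ ≤ (s1 * F + 2) ^ (M + 1) * |g x| := by rw [hsf]; gcongr

section CK
variable {E : Type} [NormedAddCommGroup E] [NormedSpace ℝ E]

lemma quot_bound (f g : E → ℝ) (hZ : ∀ x, g x = 0 → f x = 0) (M : ℕ)
    (hL : ∀ x0, ∃ C : ℝ, ∀ᶠ x in nhds x0, |f x| ^ M ≤ C * |g x|) (a b : ℕ) (ha : M * b + 1 ≤ a)
    (x0 : E) : ∃ C : ℝ, 0 ≤ C ∧ ∀ᶠ x in nhds x0, |f x ^ a / g x ^ b| ≤ C * |f x| ^ (a - M * b) := by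
  obtain ⟨C, hC⟩ := hL x0
  refine ⟨|C| ^ b, by positivity, ?_⟩
  filter_upwards [hC] with x hx
  by_cases h0 : g x = 0
  · rw [hZ x h0, zero_pow (by omega), zero_div, abs_zero]; positivity
  have hg : 0 < |g x| := abs_pos.2 h0
  have h1 : |f x| ^ M ≤ |C| * |g x| := hx.trans (by gcongr; exact le_abs_self C)
  rw [abs_div, abs_pow, abs_pow, div_le_iff₀ (by positivity)]
  calc |f x| ^ a = (|f x| ^ M) ^ b * |f x| ^ (a - M * b) := by
        rw [← pow_mul, ← pow_add]; congr 1; omega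
    _ ≤ (|C| * |g x|) ^ b * |f x| ^ (a - M * b) := by gcongr
    _ = _ := by rw [mul_pow]; ring

lemma quot_cont {F : Type} [NormedAddCommGroup F] [NormedSpace ℝ F]
    (f g : E → ℝ) (hf : Continuous f) (hg : Continuous g)
    (hZ : ∀ x, g x = 0 → f x = 0) (M : ℕ)
    (hL : ∀ x0, ∃ C : ℝ, ∀ᶠ x in nhds x0, |f x| ^ M ≤ C * |g x|) (a b : ℕ) (ha : M * b + 1 ≤ a)
    (u : E → F) (hu : Continuous u) : Continuous (fun x => (f x ^ a / g x ^ b) • u x) := by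
  refine Continuous.smul (f := fun x => f x ^ a / g x ^ b) ?_ hu
  rw [continuous_iff_continuousAt]
  intro x0
  by_cases h0 : g x0 = 0
  · obtain ⟨C, hC0, hC⟩ := quot_bound f g hZ M hL a b ha x0
    have hf0 := hZ x0 h0
    rw [ContinuousAt, hf0, zero_pow (by omega), zero_div]
    apply squeeze_zero_norm' (a := fun x => C * |f x| ^ (a - M * b)) hC
    have : Continuous (fun x => C * |f x| ^ (a - M * b)) := by fun_prop
    have h2 := this.tendsto x0
    simp only [hf0, abs_zero] at h2
    rwa [zero_pow (by omega), mul_zero] at h2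
  · exact (hf.continuousAt.pow a).div (hg.continuousAt.pow b) (pow_ne_zero _ h0)

lemma quot_contDiff (f g : E → ℝ) (hZ : ∀ x, g x = 0 → f x = 0) (M : ℕ)
    (hL : ∀ x0, ∃ C : ℝ, ∀ᶠ x in nhds x0, |f x| ^ M ≤ C * |g x|) (j : ℕ) :
    ∀ {F : Type} [NormedAddCommGroup F] [NormedSpace ℝ F] (u : E → F) (a b : ℕ),
    ContDiff ℝ j f → ContDiff ℝ j g → ContDiff ℝ j u → M * (b + j) + j + 2 ≤ a →
    ContDiff ℝ j (fun x => (f x ^ a / g x ^ b) • u x) := by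
  induction j with
  | zero =>
    intro F _ _ u a b hf hg hu ha
    simp only [Nat.cast_zero, contDiff_zero] at hf hg hu ⊢
    exact quot_cont f g hf hg hZ M hL a b (by
      have : M * (b + 0) = M * b := rfl
      omega) u hu
  | succ j ih =>
    intro F _ _ u a b hf hg hu ha
    have e : ((j + 1 : ℕ) : WithTop ℕ∞) = (j : WithTop ℕ∞) + 1 := by push_cast; rfl
    have hf' := hf
    have hg' := hg
    have hu' := hu
    rw [e, contDiff_succ_iff_hasFDerivAt] at hf' hg' hu'
    obtain ⟨Df, hDf, hDf'⟩ := hf'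
    obtain ⟨Dg, hDg, hDg'⟩ := hg'
    obtain ⟨Du, hDu, hDu'⟩ := hu'
    have hle : (j : WithTop ℕ∞) ≤ ((j + 1 : ℕ) : WithTop ℕ∞) := by exact_mod_cast Nat.le_succ j
    have hfj := hf.of_le hle
    have hgj := hg.of_le hle
    have huj := hu.of_le hle
    have hM1 : M * (b + (j + 1)) = M * (b + j) + M := by ring
    have hM2 : M * (b + 1 + j) = M * (b + j) + M := by ring
    have hM3 : M * b ≤ M * (b + j) := Nat.mul_le_mul_left _ (by omega)
    rw [e, contDiff_succ_iff_hasFDerivAt]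
    refine ⟨fun x => (f x ^ a / g x ^ b) • Du x +
      (f x ^ (a - 1) / g x ^ b) • ((a : ℝ) • (Df x).smulRight (u x)) -
      (f x ^ a / g x ^ (b + 1)) • ((b : ℝ) • (Dg x).smulRight (u x)), ?_, ?_⟩
    · apply ContDiff.sub
      · apply ContDiff.add
        · exact ih Du a b hfj hgj hDu (by omega)
        · exact ih (fun x => (a : ℝ) • (Df x).smulRight (u x)) (a - 1) b hfj hgj
            ((hDf.smulRight huj).const_smul (a : ℝ)) (by omega)
      · exact ih (fun x => (b : ℝ) • (Dg x).smulRight (u x)) a (b + 1) hfj hgj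
            ((hDg.smulRight huj).const_smul (b : ℝ)) (by omega)
    · intro x0
      by_cases h0 : g x0 = 0
      · have hf0 := hZ x0 h0
        have hz : (f x0 ^ a / g x0 ^ b) • Du x0 +
          (f x0 ^ (a - 1) / g x0 ^ b) • ((a : ℝ) • (Df x0).smulRight (u x0)) -
          (f x0 ^ a / g x0 ^ (b + 1)) • ((b : ℝ) • (Dg x0).smulRight (u x0)) = 0 := by
          rw [hf0, zero_pow (by omega), zero_pow (by omega)]; simp
        refine HasFDerivAt.congr_fderiv ?_ hz.symm
        rw [hasFDerivAt_iff_isLittleO]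
        have hv : (f x0 ^ a / g x0 ^ b) • u x0 = 0 := by
          rw [hf0, zero_pow (by omega)]; simp
        simp only [hv, sub_zero, zero_apply]
        obtain ⟨C, hC0, hC⟩ := quot_bound f g hZ M hL a b (by omega) x0
        have k1 : (fun x => f x ^ a / g x ^ b) =O[nhds x0] (fun x => f x ^ (a - M * b)) := by
          apply Asymptotics.IsBigO.of_bound C
          filter_upwards [hC] with x hx
          rw [Real.norm_eq_abs, norm_pow, Real.norm_eq_abs]
          exact hx
        have k2 : f =O[nhds x0] (fun x => x - x0) := by
          have := (hDf' x0).isBigO_sub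
          simpa [hf0] using this
        have k3 : (fun x => f x ^ (a - M * b)) =O[nhds x0] (fun x => f x ^ 2) := by
          apply Asymptotics.IsBigO.of_bound 1
          have h1 : ∀ᶠ x in nhds x0, |f x| < 1 := by
            apply hf.continuous.abs.continuousAt.eventually (gt_mem_nhds _)
            simp [hf0]
          filter_upwards [h1] with x hx
          rw [one_mul, norm_pow, norm_pow, Real.norm_eq_abs]
          exact pow_le_pow_of_le_one (abs_nonneg _) hx.le (by omega)
        have k4 : (fun x => f x ^ 2) =o[nhds x0] (fun x => x - x0) := by
          have k5 : f =o[nhds x0] (fun x => (1 : ℝ)) := by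
            rw [Asymptotics.isLittleO_one_iff]
            have := hf.continuous.tendsto x0
            rwa [hf0] at this
          have k6 := k5.mul_isBigO (k2.norm_right)
          have k7 := k6.norm_left
          apply Asymptotics.IsLittleO.of_norm_right
          simpa [sq] using k6
        have k5 : u =O[nhds x0] (fun x => (1 : ℝ)) := (hu.continuous.tendsto x0).isBigO_one ℝ
        have k6 := ((k1.trans k3).trans_isLittleO k4)
        have k7 := k6.norm_right.smul_isBigO k5
        apply Asymptotics.IsLittleO.of_norm_right
        simpa using k7
      · have d1 : HasFDerivAt (fun x => f x ^ a) ((a : ℝ) • f x0 ^ (a - 1) • Df x0) x0 := by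
          have := (hDf' x0).pow a
          refine HasFDerivAt.congr_fderiv this ?_
          rw [smul_smul, nsmul_eq_mul]
        have d2 : HasFDerivAt (fun x => (g x ^ b)⁻¹)
            (-(((b : ℝ) / g x0 ^ (b + 1)) • Dg x0)) x0 := by
          have hh : HasDerivAt (fun y : ℝ => (y ^ b)⁻¹) (-((b : ℝ) / g x0 ^ (b + 1))) (g x0) := by
            have := (hasDerivAt_pow b (g x0)).fun_inv (pow_ne_zero _ h0)
            refine HasDerivAt.congr_deriv this ?_
            rcases b with _ | b
            · simp
            · simp only [Nat.add_sub_cancel]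
              rw [neg_div]
              congr 1
              rw [div_eq_div_iff (pow_ne_zero _ (pow_ne_zero _ h0)) (pow_ne_zero _ h0)]
              ring
          have := hh.comp_hasFDerivAt x0 (hDg' x0)
          rw [neg_smul] at this
          exact this
        have d3 := (d1.mul d2).smul (hDu' x0)
        have efun : (fun x => (f x ^ a / g x ^ b) • u x) =
          (fun x => ((fun x => f x ^ a) * (fun x => (g x ^ b)⁻¹)) x • u x) := by
          funext x; simp [div_eq_mul_inv]
        rw [efun]
        refine HasFDerivAt.congr_fderiv d3 ?_
        ext v
        simp only [add_apply, sub_apply,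
          smul_apply, ContinuousLinearMap.smulRight_apply,
          neg_apply, smul_eq_mul, Pi.mul_apply, smul_smul, smul_neg]
        rw [add_sub_assoc, ← sub_smul, ← div_eq_mul_inv]
        congr 2
        rw [pow_succ (g x0)]
        field_simp
        ring

end CK

/-- if `Z(g) ⊆ Z(f)` for regulous functions then some power of `f` is a multiple of `g` -/
lemma pow_mem {n k : ℕ} (f g : (Fin n → ℝ) → ℝ) (hf : IsRegulous n k f) (hg : IsRegulous n k g)
    (hZ : ∀ x, g x = 0 → f x = 0)
    (hLoj : ∃ M : ℕ, ∀ x0, ∃ C : ℝ, ∀ᶠ x in nhds x0, |f x| ^ M ≤ C * |g x|) :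
    ∃ (N : ℕ) (h : (Fin n → ℝ) → ℝ), IsRegulous n k h ∧ ∀ x, f x ^ N = g x * h x := by
  obtain ⟨M, hL⟩ := hLoj
  obtain ⟨hf, p₁, q₁, hq₁, h₁⟩ := hf
  obtain ⟨hg, p₂, q₂, hq₂, h₂⟩ := hg
  obtain ⟨N, hN⟩ : ∃ N, N = M * (1 + k) + k + 2 := ⟨_, rfl⟩
  have hN0 : N ≠ 0 := by rw [hN]; exact Nat.succ_ne_zero _
  have hc := quot_contDiff f g hZ M hL k (fun _ => (1:ℝ)) N 1 hf hg contDiff_const hN.ge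
  simp only [smul_eq_mul, mul_one, pow_one] at hc
  by_cases hp2 : p₂ = 0
  · -- then g = 0 and f = 0
    have hg0 : ∀ x, g x = 0 := by
      have : Continuous g := hg.continuous
      have hcl : IsClosed {x | g x = 0} := isClosed_eq this continuous_const
      intro x
      refine hcl.closure_subset_iff.2 ?_ (dense_ne q₂ hq₂ x)
      intro y hy
      have h3 := h₂ y
      rw [hp2, map_zero] at h3
      exact (mul_eq_zero.1 h3).resolve_left hy
    refine ⟨1, fun _ => 0, ⟨contDiff_const, 0, 1, one_ne_zero, by simp⟩, fun x => ?_⟩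
    rw [hZ x (hg0 x)]; simp
  refine ⟨N, fun x => f x ^ N / g x, ⟨hc, p₁ ^ N * q₂, q₁ ^ N * p₂,
    mul_ne_zero (pow_ne_zero _ hq₁) hp2, fun x => ?_⟩, fun x => ?_⟩
  · simp only [map_mul, map_pow, ← h₁, ← h₂]
    by_cases h0 : g x = 0
    · rw [h0, hZ x h0, div_zero, mul_zero, mul_zero, zero_pow hN0, zero_mul]
    · rw [mul_pow]; field_simp
  · by_cases h0 : g x = 0
    · rw [h0, hZ x h0, zero_mul, zero_pow hN0]
    · field_simp

/-- evaluation of a polynomial at `(x, σ)` -/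
noncomputable def pev {R X : Type*} [CommRing R] (ev : X → R →+* ℝ) (x : X) (σ : ℝ) :
    Polynomial R →+* ℝ := Polynomial.eval₂RingHom (ev x) σ

lemma pev_eq {R X : Type*} [CommRing R] (ev : X → R →+* ℝ) (x : X) (σ : ℝ) (u : Polynomial R) :
    pev ev x σ u = (u.map (ev x)).eval σ := by
  rw [pev, Polynomial.coe_eval₂RingHom, Polynomial.eval₂_eq_eval_map]

lemma pev_C {R X : Type*} [CommRing R] (ev : X → R →+* ℝ) (x : X) (σ : ℝ) (c : R) :
    pev ev x σ (Polynomial.C c) = ev x c := by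
  simp [pev]

lemma pev_cont {R X : Type*} [CommRing R] [TopologicalSpace X] (ev : X → R →+* ℝ)
    (hc : ∀ c, Continuous (fun x => ev x c)) (σ : ℝ) (u : Polynomial R) :
    Continuous (fun x => pev ev x σ u) := by
  simp only [pev, Polynomial.coe_eval₂RingHom, Polynomial.eval₂_eq_sum_range]
  exact continuous_finsetSum _ fun i _ => (hc _).mul continuous_const

lemma sign_change (G : Polynomial ℝ) (τ : ℝ) (h0 : G.eval τ = 0) (h1 : G.derivative.eval τ ≠ 0)
    (ε : ℝ) (hε : 0 < ε) : ∃ σ ∈ Set.Ioo (τ - ε) (τ + ε), G.eval σ < 0 := by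
  by_contra hcon
  push Not at hcon
  apply h1
  have hmin : IsLocalMin (fun x => G.eval x) τ := by
    have : Set.Ioo (τ - ε) (τ + ε) ∈ nhds τ := Ioo_mem_nhds (by linarith) (by linarith)
    filter_upwards [this] with x hx
    rw [h0]; exact hcon x hx
  exact hmin.hasDerivAt_eq_zero (G.hasDerivAt τ)

section Core
variable {R : Type*} [CommRing R]

lemma mem_of_coeff (Q : Ideal (Polynomial R)) (u : Polynomial R)
    (h : ∀ i, u.coeff i ∈ Q.comap Polynomial.C) : u ∈ Q :=
  Ideal.map_comap_le (f := Polynomial.C) (Ideal.mem_map_C_iff.2 h)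

lemma eraseLead_mem {Q J : Ideal (Polynomial R)} (hJ : Q ≤ J) (u : Polynomial R) (hu : u ∈ J)
    (hl : u.leadingCoeff ∈ Q.comap Polynomial.C) : u.eraseLead ∈ J := by
  have h1 : u.eraseLead = u - Polynomial.C u.leadingCoeff * Polynomial.X ^ u.natDegree := by
    rw [eq_sub_iff_add_eq, Polynomial.eraseLead_add_C_mul_X_pow]
  rw [h1]
  exact J.sub_mem hu (J.mul_mem_right _ (hJ hl))

/-- structure of a prime ideal of `R[T]` with algebraic generic point -/
lemma alg_case (Q : Ideal (Polynomial R)) [hQ : Q.IsPrime]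
    (hk : ∀ k : ℕ, k ≠ 0 → (k : R) ∉ Q.comap Polynomial.C)
    (hex : ∃ u ∈ Q, ∃ i, u.coeff i ∉ Q.comap Polynomial.C) :
    ∃ m ∈ Q, m.leadingCoeff ∉ Q.comap Polynomial.C ∧ m.derivative ∉ Q ∧
      (∀ u ∈ Q, ∃ (e : ℕ) (a r : Polynomial R), Polynomial.C (m.leadingCoeff ^ e) * u = a * m + r ∧
        ∀ i, r.coeff i ∈ Q.comap Polynomial.C) ∧
      (∀ q ∉ Q, ∃ q0 ∉ Q.comap Polynomial.C, ∃ b, q * b - Polynomial.C q0 ∈ Q) := by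
  classical
  set Q' := Q.comap Polynomial.C with hQ'
  have hQp : Q'.IsPrime := Ideal.comap_isPrime _ _
  have hex2 : ∃ d, ∃ u ∈ Q, u.natDegree = d ∧ ∃ i, u.coeff i ∉ Q' := by
    obtain ⟨u, hu, i, hi⟩ := hex
    exact ⟨_, u, hu, rfl, i, hi⟩
  obtain ⟨m, hm, hmd, i, hi⟩ := Nat.find_spec hex2
  set d := Nat.find hex2 with hd
  have hmin : ∀ u ∈ Q, u.natDegree < d → ∀ i, u.coeff i ∈ Q' := by
    intro u hu hud i
    by_contra hcon
    exact Nat.find_min hex2 hud ⟨u, hu, rfl, i, hcon⟩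
  have hl : m.leadingCoeff ∉ Q' := by
    intro hl
    have h1 := eraseLead_mem (le_refl Q) m hm hl
    have hid : i ≠ m.natDegree := by
      rintro rfl; exact hi hl
    have h2 : m.eraseLead.coeff i ∉ Q' := by
      rwa [Polynomial.eraseLead_coeff_of_ne i hid]
    rcases Polynomial.eraseLead_natDegree_lt_or_eraseLead_eq_zero m with h3 | h3
    · exact h2 (hmin _ h1 (by omega) i)
    · rw [h3] at h2; simp at h2
  have hd1 : 1 ≤ d := by
    by_contra hcon
    have h0 : m.natDegree = 0 := by omega
    apply hl
    have := Polynomial.eq_C_of_natDegree_eq_zero h0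
    rw [Polynomial.leadingCoeff, h0]
    rw [this] at hm
    exact hm
  have hmc : m.coeff d = m.leadingCoeff := by rw [Polynomial.leadingCoeff, hmd]
  refine ⟨m, hm, hl, ?_, ?_, ?_⟩
  · intro hder
    have h1 := Polynomial.natDegree_derivative_le m
    have h2 := hmin _ hder (by omega) (d - 1)
    rw [Polynomial.coeff_derivative, Nat.sub_add_cancel hd1, hmc] at h2
    rcases hQp.mem_or_mem h2 with h3 | h3
    · exact hl h3
    · apply hk d (by omega)
      have : ((d - 1 : ℕ) : R) + 1 = (d : R) := by
        rw [← Nat.cast_succ]; congr 1; omega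
      rwa [this] at h3
  · intro u hu
    obtain ⟨e, a, r, h1, h2, -⟩ := pseudo_div m (by omega) (u.natDegree + 1) u (by omega)
    refine ⟨e, a, r, h1, hmin r ?_ (by omega)⟩
    have : r = Polynomial.C (m.leadingCoeff ^ e) * u - a * m := by rw [h1]; ring
    rw [this]
    exact Q.sub_mem (Q.mul_mem_left _ hu) (Q.mul_mem_left _ hm)
  · intro q hq
    set J := Ideal.span {q} ⊔ Q with hJ
    have hQJ : Q ≤ J := le_sup_right
    have hqJ : q ∈ J := Ideal.mem_sup_left (Ideal.mem_span_singleton_self q)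
    have hex3 : ∃ e, ∃ v ∈ J, v ∉ Q ∧ v.natDegree = e := ⟨_, q, hqJ, hq, rfl⟩
    obtain ⟨v, hv, hvQ, hve⟩ := Nat.find_spec hex3
    set e := Nat.find hex3
    have hmin2 : ∀ u ∈ J, u.natDegree < e → u ∈ Q := by
      intro u hu hue
      by_contra hcon
      exact Nat.find_min hex3 hue ⟨u, hu, hcon, rfl⟩
    have hlv : v.leadingCoeff ∉ Q' := by
      intro hlv
      have h1 := eraseLead_mem hQJ v hv hlv
      have h3 : v = v.eraseLead + Polynomial.C v.leadingCoeff * Polynomial.X ^ v.natDegree :=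
        (Polynomial.eraseLead_add_C_mul_X_pow v).symm
      have h2 : v.eraseLead ∉ Q := by
        intro h2
        apply hvQ
        rw [h3]
        exact Q.add_mem h2 (Q.mul_mem_right _ hlv)
      rcases Polynomial.eraseLead_natDegree_lt_or_eraseLead_eq_zero v with h4 | h4
      · exact h2 (hmin2 _ h1 (by omega))
      · rw [h4] at h2; simp at h2
    have he0 : e = 0 := by
      by_contra hne
      have hed : e < d := by
        obtain ⟨k, b, r, h1, h2, -⟩ := pseudo_div m (by omega) (v.natDegree + 1) v (by omega)
        have hrJ : r ∈ J := by
          have : r = Polynomial.C (m.leadingCoeff ^ k) * v - b * m := by rw [h1]; ring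
          rw [this]
          exact J.sub_mem (J.mul_mem_left _ hv) (J.mul_mem_left _ (hQJ hm))
        have hrQ : r ∉ Q := by
          intro hr
          have h4 : Polynomial.C (m.leadingCoeff ^ k) * v ∈ Q := by
            rw [h1]; exact Q.add_mem (Q.mul_mem_left _ hm) hr
          rcases hQ.mem_or_mem h4 with h5 | h5
          · exact hl (hQp.mem_of_pow_mem k h5)
          · exact hvQ h5
        by_contra hcon
        exact hrQ (hmin2 r hrJ (by omega))
      obtain ⟨k, a, r, h1, h2, h3⟩ := pseudo_div v (by omega) (d - e + 1) m (by omega)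
      have hrQ : r ∈ Q := by
        apply hmin2 r _ (by omega)
        have : r = Polynomial.C (v.leadingCoeff ^ k) * m - a * v := by rw [h1]; ring
        rw [this]
        exact J.sub_mem (J.mul_mem_left _ (hQJ hm)) (J.mul_mem_left _ hv)
      have haQ : a ∈ Q := by
        have : a * v ∈ Q := by
          have : a * v = Polynomial.C (v.leadingCoeff ^ k) * m - r := by rw [h1]; ring
          rw [this]
          exact Q.sub_mem (Q.mul_mem_left _ hm) hrQ
        exact (hQ.mem_or_mem this).resolve_right hvQ
      have hr' := Ideal.mem_map_C_iff.2 (hmin r hrQ (by omega))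
      have ha' := Ideal.mem_map_C_iff.2 (hmin a haQ (by omega))
      have h5 : Polynomial.C (v.leadingCoeff ^ k) * m ∈ Ideal.map Polynomial.C Q' := by
        rw [h1]; exact Ideal.add_mem _ (Ideal.mul_mem_right _ _ ha') hr'
      have h6 := Ideal.mem_map_C_iff.1 h5 d
      rw [Polynomial.coeff_C_mul, hmc] at h6
      rcases hQp.mem_or_mem h6 with h7 | h7
      · exact hlv (hQp.mem_of_pow_mem k h7)
      · exact hl h7
    have hvC : v = Polynomial.C v.leadingCoeff := by
      have := Polynomial.eq_C_of_natDegree_eq_zero (hve.trans he0)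
      conv_lhs => rw [this]
      rw [Polynomial.leadingCoeff, hve.trans he0]
    refine ⟨v.leadingCoeff, hlv, ?_⟩
    rw [← hvC]
    obtain ⟨y, hy, z, hz, hyz⟩ := Submodule.mem_sup.1 hv
    obtain ⟨b, rfl⟩ := Ideal.mem_span_singleton.1 hy
    refine ⟨b, ?_⟩
    rw [← hyz]
    simpa using hz

lemma dens_step {X : Type*} [TopologicalSpace X] (ev : X → R →+* ℝ)
    (hc : ∀ c, Continuous (fun x => ev x c)) (Q : Ideal (Polynomial R)) [hQ : Q.IsPrime]
    (t' : R) (ht' : t' ∉ Q.comap Polynomial.C)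
    (ih : ∀ a, (∀ c ∈ Q.comap Polynomial.C, ev a c = 0) → ev a t' ≠ 0 →
      ∀ q ∉ Q.comap Polynomial.C, ∀ U ∈ nhds a,
        ∃ x ∈ U, (∀ c ∈ Q.comap Polynomial.C, ev x c = 0) ∧ ev x q ≠ 0) :
    ∃ t ∉ Q, ∀ a τ, (∀ u ∈ Q, pev ev a τ u = 0) → pev ev a τ t ≠ 0 →
      ∀ q ∉ Q, ∀ U ∈ nhds (a, τ), ∃ x σ, (x, σ) ∈ U ∧ (∀ u ∈ Q, pev ev x σ u = 0) ∧
        pev ev x σ q ≠ 0 := by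
  have hQp : (Q.comap Polynomial.C).IsPrime := Ideal.comap_isPrime _ _
  have hVV : ∀ a τ, (∀ u ∈ Q, pev ev a τ u = 0) → ∀ c ∈ Q.comap Polynomial.C, ev a c = 0 := by
    intro a τ h c hcQ
    have := h _ hcQ
    rwa [pev_C] at this
  by_cases hne : ∃ a τ, ∀ u ∈ Q, pev ev a τ u = 0
  swap
  · refine ⟨1, fun h => hQ.ne_top ((Ideal.eq_top_iff_one _).2 h), fun a τ h => ?_⟩
    exact absurd ⟨a, τ, h⟩ hne
  have hk : ∀ k : ℕ, k ≠ 0 → (k : R) ∉ Q.comap Polynomial.C := by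
    intro k hk0 hk
    obtain ⟨a, τ, h⟩ := hne
    have := hVV a τ h _ hk
    rw [map_natCast] at this
    exact hk0 (by exact_mod_cast this)
  by_cases hex : ∃ u ∈ Q, ∃ i, u.coeff i ∉ Q.comap Polynomial.C
  · obtain ⟨m, hm, hl, hder, hdiv, helim⟩ := alg_case Q hk hex
    refine ⟨Polynomial.C t' * Polynomial.C m.leadingCoeff * m.derivative, ?_, ?_⟩
    · intro h
      rcases hQ.mem_or_mem h with h1 | h1
      · rcases hQ.mem_or_mem h1 with h2 | h2
        · exact ht' h2
        · exact hl h2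
      · exact hder h1
    intro a τ hV ht q hq U hU
    rw [map_mul, map_mul, pev_C, pev_C] at ht
    have hta := left_ne_zero_of_mul (left_ne_zero_of_mul ht)
    have hla := right_ne_zero_of_mul (left_ne_zero_of_mul ht)
    have hda := right_ne_zero_of_mul ht
    obtain ⟨q0, hq0, b, hb⟩ := helim q hq
    rw [nhds_prod_eq, Filter.mem_prod_iff] at hU
    obtain ⟨U1, hU1, W, hW, hUW⟩ := hU
    obtain ⟨ε, hε, hεW⟩ := Metric.mem_nhds_iff.1 hW
    rw [Real.ball_eq_Ioo] at hεW
    set G := m.map (ev a) with hG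
    have hG0 : G.eval τ = 0 := by rw [hG, ← pev_eq]; exact hV m hm
    have hG1 : G.derivative.eval τ ≠ 0 := by
      rw [hG, Polynomial.derivative_map, ← pev_eq]; exact hda
    obtain ⟨σ1, hσ1, hs1⟩ := sign_change G τ hG0 hG1 ε hε
    obtain ⟨σ2, hσ2, hs2⟩ := sign_change (-G) τ (by simp [hG0]) (by simpa using hG1) ε hε
    rw [Polynomial.eval_neg, neg_lt_zero] at hs2
    rw [hG, ← pev_eq] at hs1 hs2
    have n1 : ∀ᶠ x in nhds a, pev ev x σ1 m < 0 :=
      (pev_cont ev hc σ1 m).continuousAt.eventually (gt_mem_nhds hs1)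
    have n2 : ∀ᶠ x in nhds a, 0 < pev ev x σ2 m :=
      (pev_cont ev hc σ2 m).continuousAt.eventually (lt_mem_nhds hs2)
    have n3 : ∀ᶠ x in nhds a, ev x m.leadingCoeff ≠ 0 :=
      (hc m.leadingCoeff).continuousAt.eventually_ne hla
    obtain ⟨x, ⟨⟨⟨hx1, hx2⟩, hx3⟩, hx4⟩, hxV, hxq⟩ := ih a (hVV a τ hV) hta q0 hq0 _
      (((n1.and n2).and n3).and hU1)
    have hIVT : ∃ σ ∈ Set.uIcc σ1 σ2, pev ev x σ m = 0 := by
      have hcont : ContinuousOn (fun σ => (m.map (ev x)).eval σ) (Set.uIcc σ1 σ2) :=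
        (m.map (ev x)).continuous.continuousOn
      have := intermediate_value_uIcc hcont
      obtain ⟨σ, hσ, hσ0⟩ := this (show (0:ℝ) ∈ _ by
        rw [pev_eq] at hx1 hx2
        rw [Set.mem_uIcc]; left; exact ⟨hx1.le, hx2.le⟩)
      exact ⟨σ, hσ, by rw [pev_eq]; exact hσ0⟩
    obtain ⟨σ, hσ, hσ0⟩ := hIVT
    have hσW : σ ∈ W := hεW (Set.OrdConnected.uIcc_subset Set.ordConnected_Ioo hσ1 hσ2 hσ)
    have hxσ : ∀ u ∈ Q, pev ev x σ u = 0 := by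
      intro u hu
      obtain ⟨e, c, r, h1, h2⟩ := hdiv u hu
      have h3 : pev ev x σ r = 0 := by
        have : r.map (ev x) = 0 := by
          ext i; rw [Polynomial.coeff_map, hxV _ (h2 i), Polynomial.coeff_zero]
        rw [pev_eq, this, Polynomial.eval_zero]
      have h4 := congrArg (pev ev x σ) h1
      rw [map_mul, map_add, map_mul, hσ0, h3, mul_zero, add_zero, pev_C, map_pow] at h4
      exact (mul_eq_zero.1 h4).resolve_left (pow_ne_zero _ hx3)
    refine ⟨x, σ, hUW ⟨hx4, hσW⟩, hxσ, ?_⟩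
    intro h0
    have := hxσ _ hb
    rw [map_sub, map_mul, h0, zero_mul, zero_sub, neg_eq_zero, pev_C] at this
    exact hxq this
  · push Not at hex
    refine ⟨Polynomial.C t', ht', ?_⟩
    intro a τ hV ht q hq U hU
    rw [pev_C] at ht
    rw [nhds_prod_eq, Filter.mem_prod_iff] at hU
    obtain ⟨U1, hU1, W, hW, hUW⟩ := hU
    obtain ⟨ε, hε, hεW⟩ := Metric.mem_nhds_iff.1 hW
    rw [Real.ball_eq_Ioo] at hεW
    obtain ⟨i, hi⟩ : ∃ i, q.coeff i ∉ Q.comap Polynomial.C := by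
      by_contra hcon
      push Not at hcon
      exact hq (mem_of_coeff Q q hcon)
    obtain ⟨x, hxU, hxV, hxq⟩ := ih a (hVV a τ hV) ht _ hi U1 hU1
    have hq0 : q.map (ev x) ≠ 0 := by
      intro h0
      apply hxq
      rw [← Polynomial.coeff_map, h0, Polynomial.coeff_zero]
    have hinf : (Set.Ioo (τ - ε) (τ + ε)).Infinite := Set.Ioo_infinite (by linarith)
    obtain ⟨σ, hσ, hσr⟩ := (hinf.sdiff ((q.map (ev x)).roots.toFinset.finite_toSet)).nonempty
    refine ⟨x, σ, hUW ⟨hxU, hεW hσ⟩, ?_, ?_⟩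
    · intro u hu
      have : u.map (ev x) = 0 := by
        ext j; rw [Polynomial.coeff_map, hxV _ (hex u hu j), Polynomial.coeff_zero]
      rw [pev_eq, this, Polynomial.eval_zero]
    · rw [pev_eq]
      intro h0
      apply hσr
      simp [hq0, h0]

end Core

lemma density (n : ℕ) : ∀ (P : Ideal (MvPolynomial (Fin n) ℝ)) [P.IsPrime],
    ∃ t ∉ P, ∀ a : Fin n → ℝ, (∀ c ∈ P, eval a c = 0) → eval a t ≠ 0 →
      ∀ q ∉ P, ∀ U ∈ nhds a, ∃ x ∈ U, (∀ c ∈ P, eval x c = 0) ∧ eval x q ≠ 0 := by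
  induction n with
  | zero =>
    intro P hP
    refine ⟨1, fun h => hP.ne_top ((Ideal.eq_top_iff_one _).2 h), ?_⟩
    intro a ha _ q hq U hU
    refine ⟨a, mem_of_mem_nhds hU, ha, fun h0 => hq ?_⟩
    obtain ⟨c, rfl⟩ := MvPolynomial.C_surjective (Fin 0) q
    rw [eval_C] at h0
    rw [h0, map_zero]; exact P.zero_mem
  | succ n ih =>
    intro P hP
    let φ := MvPolynomial.finSuccEquiv ℝ n
    let Q : Ideal (Polynomial (MvPolynomial (Fin n) ℝ)) := P.comap (φ.symm : _ →+* _)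
    have hQ : Q.IsPrime := Ideal.comap_isPrime _ _
    have hQP : ∀ u, φ u ∈ Q ↔ u ∈ P := by
      intro u
      rw [Ideal.mem_comap]
      simp
    have hev : ∀ (x : Fin n → ℝ) (σ : ℝ) (u : MvPolynomial (Fin (n+1)) ℝ),
        pev (fun x : Fin n → ℝ => eval x) x σ (φ u) = eval (Fin.cons σ x : Fin (n+1) → ℝ) u := by
      intro x σ u
      rw [pev_eq, MvPolynomial.eval_eq_eval_mv_eval']
    have hsurj : ∀ v, ∃ u, φ u = v := φ.surjective
    have hVQ : ∀ (x : Fin n → ℝ) (σ : ℝ), (∀ v ∈ Q, pev (fun x : Fin n → ℝ => eval x) x σ v = 0) ↔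
        ∀ c ∈ P, eval (Fin.cons σ x : Fin (n+1) → ℝ) c = 0 := by
      intro x σ
      constructor
      · intro h c hc
        rw [← hev]; exact h _ ((hQP c).2 hc)
      · intro h v hv
        obtain ⟨u, rfl⟩ := hsurj v
        rw [hev]; exact h _ ((hQP u).1 hv)
    obtain ⟨t', ht', hih⟩ := @ih (Q.comap Polynomial.C) (Ideal.comap_isPrime _ _)
    obtain ⟨t, ht, hmain⟩ := dens_step (fun x : Fin n → ℝ => eval x)
      (fun c => MvPolynomial.continuous_eval c) Q t' ht' hih
    obtain ⟨t1, rfl⟩ := hsurj t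
    refine ⟨t1, fun h => ht ((hQP t1).2 h), ?_⟩
    intro a ha hta q hq U hU
    have hacons : (Fin.cons (a 0) (Fin.tail a) : Fin (n+1) → ℝ) = a := Fin.cons_self_tail a
    have hcont : Continuous (fun y : (Fin n → ℝ) × ℝ => (Fin.cons y.2 y.1 : Fin (n+1) → ℝ)) := by
      rw [continuous_pi_iff]
      intro i
      refine Fin.cases ?_ (fun j => ?_) i
      · simpa using continuous_snd
      · simp only [Fin.cons_succ]
        fun_prop
    have hU' : (fun y : (Fin n → ℝ) × ℝ => (Fin.cons y.2 y.1 : Fin (n+1) → ℝ)) ⁻¹' U ∈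
        nhds (Fin.tail a, a 0) := by
      apply hcont.continuousAt.preimage_mem_nhds
      simp only [hacons]
      exact hU
    obtain ⟨x, σ, hxU, hxV, hxq⟩ := hmain (Fin.tail a) (a 0) ((hVQ _ _).2 (by rwa [hacons]))
      (by rw [hev, hacons]; exact hta) (φ q) (fun h => hq ((hQP q).1 h)) _ hU'
    exact ⟨_, hxU, (hVQ _ _).1 hxV, by rw [← hev]; exact hxq⟩

lemma uni_lim (u : ℝ → ℝ) (hu : Continuous u) (i : ℕ) : ∀ (Q P : Polynomial ℝ),
    (∀ ε, Q.eval ε * u ε = P.eval ε) → (∀ j < i, Q.coeff j = 0) → Q.coeff i * u 0 = P.coeff i := by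
  induction i with
  | zero =>
    intro Q P h _
    rw [Polynomial.coeff_zero_eq_eval_zero, Polynomial.coeff_zero_eq_eval_zero]
    exact h 0
  | succ i ih =>
    intro Q P h hj
    have hQ0 : Q.coeff 0 = 0 := hj 0 (by omega)
    have hP0 : P.coeff 0 = 0 := by
      rw [Polynomial.coeff_zero_eq_eval_zero, ← h 0, ← Polynomial.coeff_zero_eq_eval_zero, hQ0,
        zero_mul]
    have hQ : Q = Q.divX * Polynomial.X := by
      have := Polynomial.divX_mul_X_add Q
      rw [hQ0, map_zero, add_zero] at this
      exact this.symm
    have hP : P = P.divX * Polynomial.X := by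
      have := Polynomial.divX_mul_X_add P
      rw [hP0, map_zero, add_zero] at this
      exact this.symm
    rw [← Polynomial.coeff_divX, ← Polynomial.coeff_divX]
    refine ih Q.divX P.divX ?_ ?_
    · have : (fun ε => Q.divX.eval ε * u ε) = (fun ε => P.divX.eval ε) := by
        refine Continuous.ext_on (dense_compl_singleton (0 : ℝ))
          (Q.divX.continuous.mul hu) P.divX.continuous ?_
        intro ε hε
        have hε0 : ε ≠ 0 := hε
        have h1 := h ε
        rw [hQ, hP] at h1
        simp only [Polynomial.eval_mul, Polynomial.eval_X] at h1
        apply mul_right_cancel₀ hε0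
        simp only
        linear_combination h1
      intro ε
      exact congrFun this ε
    · intro j hjl
      rw [Polynomial.coeff_divX]
      exact hj (j + 1) (by omega)

/-- restriction of a continuous rational function to a subvariety is rational -/
lemma restrict_rational {n : ℕ} (P : Ideal (MvPolynomial (Fin n) ℝ)) (V : Set (Fin n → ℝ))
    (hne : V.Nonempty) (hPV : ∀ p, p ∈ P → ∀ x ∈ V, eval x p = 0)
    (h : (Fin n → ℝ) → ℝ) (hh : Continuous h) (p q : MvPolynomial (Fin n) ℝ) (hq : q ≠ 0)
    (hpq : ∀ x, eval x q * h x = eval x p) :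
    ∃ s ∉ P, ∃ r, ∀ x ∈ V, eval x s * h x = eval x r := by
  classical
  obtain ⟨a, ha⟩ := hne
  obtain ⟨c, hc⟩ := (dense_ne q hq).nonempty
  let w : Fin n → ℝ := c - a
  let Φ : MvPolynomial (Fin n) ℝ →ₐ[ℝ] Polynomial (MvPolynomial (Fin n) ℝ) :=
    MvPolynomial.aeval (fun i => Polynomial.C (MvPolynomial.X i) +
      Polynomial.X * Polynomial.C (MvPolynomial.C (w i)))
  have hΦ : ∀ (x : Fin n → ℝ) (ε : ℝ) (u : MvPolynomial (Fin n) ℝ),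
      ((Φ u).map (eval x)).eval ε = eval (x + ε • w) u := by
    intro x ε u
    induction u using MvPolynomial.induction_on with
    | C b => simp [Φ, MvPolynomial.algebraMap_eq, Polynomial.algebraMap_apply]
    | add u v hu hv => simp only [map_add, Polynomial.map_add, Polynomial.eval_add, hu, hv]
    | mul_X u i hu =>
      simp only [map_mul, Polynomial.map_mul, Polynomial.eval_mul, hu]
      simp [Φ]
      exact Or.inl (mul_comm _ _)
  have hex : ∃ i, (Φ q).coeff i ∉ P := by
    by_contra hcon
    push Not at hcon
    apply hc
    have h1 := hΦ a 1 q
    have h2 : (Φ q).map (eval a) = 0 := by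
      ext i; rw [Polynomial.coeff_map, hPV _ (hcon i) a ha, Polynomial.coeff_zero]
    rw [h2, Polynomial.eval_zero, one_smul] at h1
    rw [h1]
    congr 2
    simp [w]
  refine ⟨(Φ q).coeff (Nat.find hex), Nat.find_spec hex, (Φ p).coeff (Nat.find hex), ?_⟩
  intro x hx
  have := uni_lim (fun ε => h (x + ε • w)) (by fun_prop) (Nat.find hex) ((Φ q).map (eval x))
    ((Φ p).map (eval x)) (fun ε => by rw [hΦ, hΦ]; exact hpq _) (fun j hj => by
      rw [Polynomial.coeff_map]
      have := Nat.find_min hex hj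
      push Not at this
      exact hPV _ this x hx)
  simpa using this

lemma exists_single {n k : ℕ} (I : Ideal (regulousRing n k)) (f : regulousRing n k)
    (hf : ∀ x, (∀ g ∈ I, g.1 x = 0) → f.1 x = 0) : ∃ g ∈ I, ∀ x, g.1 x = 0 → f.1 x = 0 := by
  classical
  by_contra hcon
  push Not at hcon
  let 𝓕 : Filter (Fin n → ℝ) := ⨅ g : I, Filter.principal {x | g.1.1 x = 0 ∧ f.1 x ≠ 0}
  have hNe : 𝓕.NeBot := by
    haveI : Nonempty I := ⟨0⟩
    apply Filter.iInf_neBot_of_directed'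
    · intro g₁ g₂
      refine ⟨⟨g₁.1 * g₁.1 + g₂.1 * g₂.1, I.add_mem (I.mul_mem_left _ g₁.2)
        (I.mul_mem_left _ g₂.2)⟩, ?_, ?_⟩
      · apply Filter.principal_mono.2
        rintro x ⟨hx, hfx⟩
        have hx' : g₁.1.1 x * g₁.1.1 x + g₂.1.1 x * g₂.1.1 x = 0 := hx
        refine ⟨?_, hfx⟩
        nlinarith [mul_self_nonneg (g₁.1.1 x), mul_self_nonneg (g₂.1.1 x)]
      · apply Filter.principal_mono.2
        rintro x ⟨hx, hfx⟩
        have hx' : g₁.1.1 x * g₁.1.1 x + g₂.1.1 x * g₂.1.1 x = 0 := hx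
        refine ⟨?_, hfx⟩
        nlinarith [mul_self_nonneg (g₁.1.1 x), mul_self_nonneg (g₂.1.1 x)]
    · intro g
      rw [Filter.principal_neBot_iff]
      obtain ⟨x, hx⟩ := hcon g.1 g.2
      exact ⟨x, hx⟩
  let 𝒰 : Ultrafilter (Fin n → ℝ) := Ultrafilter.of 𝓕
  have hI : ∀ g ∈ I, ∀ᶠ x in (𝒰 : Filter (Fin n → ℝ)), g.1 x = 0 ∧ f.1 x ≠ 0 := by
    intro g hg
    apply Ultrafilter.of_le 𝓕
    apply Filter.mem_iInf_of_mem (⟨g, hg⟩ : I)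
    exact Filter.mem_principal_self _
  let P : Ideal (MvPolynomial (Fin n) ℝ) :=
    { carrier := {p | ∀ᶠ x in (𝒰 : Filter (Fin n → ℝ)), eval x p = 0}
      add_mem' := by
        intro p q hp hq
        filter_upwards [hp, hq] with x h1 h2
        rw [map_add, h1, h2, add_zero]
      zero_mem' := Filter.Eventually.of_forall fun x => map_zero _
      smul_mem' := by
        intro c p hp
        filter_upwards [hp] with x h1
        rw [smul_eq_mul, map_mul, h1, mul_zero] }
  have hPmem : ∀ p, p ∈ P ↔ ∀ᶠ x in (𝒰 : Filter (Fin n → ℝ)), eval x p = 0 := fun p => Iff.rfl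
  have hPnot : ∀ p, p ∉ P → ∀ᶠ x in (𝒰 : Filter (Fin n → ℝ)), eval x p ≠ 0 := by
    intro p hp
    rw [hPmem, ← Ultrafilter.eventually_not] at hp
    exact hp
  have hPp : P.IsPrime := by
    refine ⟨?_, ?_⟩
    · rw [Ne, Ideal.eq_top_iff_one, hPmem]
      intro h
      obtain ⟨x, hx⟩ := h.exists
      simp at hx
    · intro p q hpq
      rw [hPmem] at hpq
      rw [hPmem, hPmem, ← Ultrafilter.eventually_or]
      filter_upwards [hpq] with x hx
      rw [map_mul] at hx
      exact mul_eq_zero.1 hx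
  let V : Set (Fin n → ℝ) := {x | ∀ c ∈ P, eval x c = 0}
  have hV : ∀ᶠ x in (𝒰 : Filter (Fin n → ℝ)), x ∈ V := by
    obtain ⟨S, hS⟩ := (isNoetherianRing_iff_ideal_fg _).1 inferInstance P
    have h1 : ∀ᶠ x in (𝒰 : Filter (Fin n → ℝ)), ∀ s ∈ S, eval x s = 0 := by
      rw [Filter.eventually_all_finset]
      intro s hs
      rw [← hPmem, ← hS]
      exact Ideal.subset_span hs
    filter_upwards [h1] with x hx c hc
    have h2 : P ≤ RingHom.ker (eval x) := by
      rw [← hS, Ideal.span_le]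
      intro s hs
      exact hx s hs
    exact h2 hc
  have hVne : V.Nonempty := hV.exists
  have hres : ∀ g : regulousRing n k, ∃ s ∉ P, ∃ r, ∀ x ∈ V, eval x s * g.1 x = eval x r := by
    intro g
    obtain ⟨hg, p, q, hq, hpq⟩ := g.2
    exact restrict_rational P V hVne (fun p hp x hx => hx p hp) g.1 hg.continuous p q hq hpq
  have hgV : ∀ g ∈ I, ∃ s ∉ P, ∀ x ∈ V, eval x s * g.1 x = 0 := by
    intro g hg
    obtain ⟨s, hs, r, hr⟩ := hres g
    have hrP : r ∈ P := by
      rw [hPmem]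
      filter_upwards [hV, hI g hg] with x h1 h2
      rw [← hr x h1, h2.1, mul_zero]
    exact ⟨s, hs, fun x hx => by rw [hr x hx]; exact hx r hrP⟩
  obtain ⟨sf, hsf, rf, hrf⟩ := hres f
  have hrfP : rf ∉ P := by
    intro hP
    obtain ⟨x, ⟨⟨h1, h2⟩, h3⟩, h4⟩ :=
      (((hV.and (hPnot sf hsf)).and ((hPmem rf).1 hP)).and (hI 0 I.zero_mem)).exists
    have := hrf x h1
    rw [h3] at this
    exact (mul_ne_zero h2 h4.2) this
  obtain ⟨t, ht, hdens⟩ := density n P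
  obtain ⟨a, ⟨haV, hta⟩, hra⟩ := ((hV.and (hPnot t ht)).and (hPnot rf hrfP)).exists
  have hfa : f.1 a ≠ 0 := by
    intro h0
    have := hrf a haV
    rw [h0, mul_zero] at this
    exact hra this.symm
  apply hfa
  apply hf
  intro g hg
  by_contra hga
  obtain ⟨s, hs, hsg⟩ := hgV g hg
  have hgc : Continuous g.1 := g.2.1.continuous
  obtain ⟨x, hxU, hxV, hxs⟩ := hdens a haV hta s hs {x | g.1 x ≠ 0}
    (hgc.continuousAt.eventually_ne hga)
  exact (mul_ne_zero hxs hxU) (hsg x hxV)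

lemma nss {n k : ℕ} (I : Ideal (regulousRing n k)) (f : regulousRing n k)
    (hf : ∀ x, (∀ g ∈ I, g.1 x = 0) → f.1 x = 0) : f ∈ I.radical := by
  obtain ⟨g, hg, hZ⟩ := exists_single I f hf
  obtain ⟨hfc, p₁, q₁, hq₁, h₁⟩ := f.2
  obtain ⟨hgc, p₂, q₂, hq₂, h₂⟩ := g.2
  have hL := loj_local f.1 g.1 hfc.continuous hgc.continuous (p₁ * q₂) (p₂ * q₁) (q₁ * q₂)
    (mul_ne_zero hq₁ hq₂) (fun x => by
      rw [map_mul, map_mul, ← h₁]; ring) (fun x => by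
      rw [map_mul, map_mul, ← h₂]; ring) hZ
  obtain ⟨N, h, hh, hN⟩ := pow_mem f.1 g.1 f.2 g.2 hZ hL
  refine ⟨N, ?_⟩
  have : f ^ N = g * ⟨h, hh⟩ := by
    apply Subtype.ext
    funext x
    exact hN x
  rw [this]
  exact I.mul_mem_right _ hg

end RegNull

/-- **Regulous functions, Corollaire `Nullstellensatz`**: the Nullstellensatz for the ring
`R^k(ℝⁿ)` of `k`-regulous functions.
(1) For every ideal `I`, the functions vanishing on `Z(I)` are exactly the radical of `I`.
(2) For every k-regulously closed set `F = Z(E)`, one has `Z(I(F)) = F`. -/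
theorem regulous_nullstellensatz (n k : ℕ) :
    (∀ I : Ideal (regulousRing n k),
      {f : regulousRing n k |
          ∀ x ∈ ⋂ g ∈ I, {x : Fin n → ℝ | (g : (Fin n → ℝ) → ℝ) x = 0},
            (f : (Fin n → ℝ) → ℝ) x = 0} =
        (I.radical : Set (regulousRing n k))) ∧
    (∀ E : Set (regulousRing n k),
      (⋂ f ∈ {f : regulousRing n k |
          ∀ x ∈ ⋂ g ∈ E, {x : Fin n → ℝ | (g : (Fin n → ℝ) → ℝ) x = 0},
            (f : (Fin n → ℝ) → ℝ) x = 0},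
        {x : Fin n → ℝ | (f : (Fin n → ℝ) → ℝ) x = 0}) =
      ⋂ g ∈ E, {x : Fin n → ℝ | (g : (Fin n → ℝ) → ℝ) x = 0}) := by
  refine ⟨fun I => ?_, fun E => ?_⟩
  · apply Set.Subset.antisymm
    · intro f hf
      refine RegNull.nss I f fun x hx => hf x ?_
      rw [Set.mem_iInter₂]
      exact fun g hg => hx g hg
    · rintro f ⟨N, hN⟩ x hx
      rw [Set.mem_iInter₂] at hx
      have h1 : (f : (Fin n → ℝ) → ℝ) x ^ N = 0 := hx _ hN
      exact eq_zero_of_pow_eq_zero h1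
  · apply Set.Subset.antisymm
    · intro x hx
      rw [Set.mem_iInter₂] at hx ⊢
      intro g hg
      refine hx g ?_
      intro y hy
      rw [Set.mem_iInter₂] at hy
      exact hy g hg
    · intro x hx
      rw [Set.mem_iInter₂]
      intro f hf
      exact hf x hx
end

section
/- Let n, k be natural numbers and let 𝔪 be a maximal ideal of the ring R^k(ℝⁿ). Then there exists a unique point x ∈ ℝⁿ such that 𝔪 = {f ∈ R^k(ℝⁿ) : f(x) = 0}. -/
open MvPolynomial

open Topology

/-- If `A(t) φ(t) = B(t)` for all `t` and `A` vanishes to order `j` at `0`, then compare leading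
coefficients. -/
lemma coeff_compare (φ : ℝ → ℝ) (hφ : Continuous φ) (j : ℕ) :
    ∀ (A B : Polynomial ℝ), (∀ t, A.eval t * φ t = B.eval t) → (∀ i < j, A.coeff i = 0) →
      A.coeff j * φ 0 = B.coeff j := by
  induction j with
  | zero =>
    intro A B h _
    have := h 0
    simpa [Polynomial.coeff_zero_eq_eval_zero] using this
  | succ j ih =>
    intro A B h hA
    have hA0 : A.coeff 0 = 0 := hA 0 (Nat.succ_pos _)
    have hB0 : B.coeff 0 = 0 := by
      have := h 0
      rw [← Polynomial.coeff_zero_eq_eval_zero, ← Polynomial.coeff_zero_eq_eval_zero, hA0] at this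
      simpa using this.symm
    obtain ⟨A', rfl⟩ := Polynomial.X_dvd_iff.2 hA0
    obtain ⟨B', rfl⟩ := Polynomial.X_dvd_iff.2 hB0
    rw [Polynomial.coeff_X_mul, Polynomial.coeff_X_mul]
    apply ih
    · have hd : Dense ({0}ᶜ : Set ℝ) := dense_compl_singleton 0
      have hcl : (fun t => A'.eval t * φ t) = fun t => B'.eval t := by
        refine Continuous.ext_on hd (A'.continuous.mul hφ) B'.continuous ?_
        intro t ht
        have ht' : t ≠ 0 := ht
        have := h t
        simp only [Polynomial.eval_mul, Polynomial.eval_X] at this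
        exact mul_left_cancel₀ ht' (by linarith)
      exact fun t => congrFun hcl t
    · intro i hi
      have := hA (i+1) (by omega)
      simpa [Polynomial.coeff_X_mul] using this

/-- The real points of the variety of polynomials vanishing at `ξ`. -/
def realPts {F : Type*} [Field F] [Algebra ℝ F] {n : ℕ} (ξ : Fin n → F) : Set (Fin n → ℝ) :=
  {a | ∀ s : MvPolynomial (Fin n) ℝ, aeval ξ s = 0 → eval a s = 0}

lemma eval_cons' {n : ℕ} (y : ℝ) (b : Fin n → ℝ) (s : MvPolynomial (Fin (n+1)) ℝ) :
    eval (Fin.cons y b : Fin (n+1) → ℝ) s = (finSuccEquiv ℝ n s).eval₂ (eval b) y := by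
  rw [eval_eq_eval_mv_eval', Polynomial.eval_map]

lemma aeval_cons' {F : Type*} [Field F] [Algebra ℝ F] {n : ℕ} (θ : F) (η : Fin n → F)
    (s : MvPolynomial (Fin (n+1)) ℝ) :
    aeval (Fin.cons θ η : Fin (n+1) → F) s =
      (finSuccEquiv ℝ n s).eval₂ ((aeval η : MvPolynomial (Fin n) ℝ →ₐ[ℝ] F) : _ →+* F) θ := by
  induction s using MvPolynomial.induction_on with
  | C a => simp [finSuccEquiv_apply]
  | add p q hp hq => simp [hp, hq]
  | mul_X p i hp =>
    rw [map_mul, map_mul, Polynomial.eval₂_mul, hp]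
    congr 1
    refine Fin.cases ?_ (fun j => ?_) i
    · simp [finSuccEquiv_X_zero]
    · simp [finSuccEquiv_X_succ]

/-- A nonzero algebraic element satisfies an equation with nonzero constant term. -/
lemma exists_const_term {F : Type*} [Field F] {R : Type*} [CommRing R] (f : R →+* F)
    (θ : F) (G : Polynomial R) (hG : G.eval₂ f θ = 0) (hG0 : G.map f ≠ 0)
    (Q : Polynomial R) (hQ : Q.eval₂ f θ ≠ 0) :
    ∃ C : Polynomial R, f (C.coeff 0) ≠ 0 ∧ C.eval₂ f (Q.eval₂ f θ) = 0 := by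
  let A := f.range
  have lift : ∀ p : Polynomial A, ∃ q : Polynomial R, q.map f.rangeRestrict = p := fun p =>
    Polynomial.map_surjective _ f.rangeRestrict_surjective p
  have hcomp : (algebraMap A F).comp f.rangeRestrict = f := by ext; rfl
  have key : ∀ (q : Polynomial R) (z : F), Polynomial.aeval z (q.map f.rangeRestrict)
      = q.eval₂ f z := by
    intro q z
    rw [Polynomial.aeval_def, Polynomial.eval₂_map, hcomp]
  have hθ : IsAlgebraic A θ := by
    refine ⟨G.map f.rangeRestrict, ?_, by rw [key, hG]⟩
    intro h
    apply hG0
    rw [← hcomp, ← Polynomial.map_map, h, Polynomial.map_zero]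
  have hQa : IsAlgebraic A (Q.eval₂ f θ) := by
    rw [← key]
    generalize Q.map f.rangeRestrict = p
    induction p using Polynomial.induction_on' with
    | add p q hp hq => rw [map_add]; exact hp.add hq
    | monomial i c =>
      rw [Polynomial.aeval_monomial]
      exact (isAlgebraic_algebraMap c).mul (hθ.pow i)
  obtain ⟨p, hp0, hp⟩ := hQa.exists_nonzero_coeff_and_aeval_eq_zero
    (mem_nonZeroDivisors_of_ne_zero hQ)
  obtain ⟨C, rfl⟩ := lift p
  refine ⟨C, ?_, by rw [← key, hp]⟩
  intro h
  apply hp0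
  rw [Polynomial.coeff_map]
  exact Subtype.ext h

lemma cont_eval₂ {n : ℕ} (G : Polynomial (MvPolynomial (Fin n) ℝ)) (y : ℝ) :
    Continuous fun b : Fin n → ℝ => G.eval₂ (eval b) y := by
  simp only [Polynomial.eval₂_eq_sum_range]
  refine continuous_finsetSum _ fun i _ => ?_
  exact (MvPolynomial.continuous_eval _).mul continuous_const

/-- simple roots persist -/
lemma root_near {n : ℕ} (G : Polynomial (MvPolynomial (Fin n) ℝ)) (a : Fin n → ℝ) (y : ℝ)
    (h0 : G.eval₂ (eval a) y = 0) (h1 : (Polynomial.derivative G).eval₂ (eval a) y ≠ 0)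
    (ε : ℝ) (hε : 0 < ε) :
    ∀ᶠ b in 𝓝 a, ∃ z, |z - y| < ε ∧ G.eval₂ (eval b) z = 0 := by
  set g : Polynomial ℝ := G.map (eval a) with hg
  have hg0 : g.eval y = 0 := by rw [hg, Polynomial.eval_map, h0]
  have hg1 : g.derivative.eval y ≠ 0 := by
    rwa [hg, Polynomial.derivative_map, Polynomial.eval_map]
  -- find points of opposite sign
  have hsign : ∃ u v, |u - y| < ε ∧ |v - y| < ε ∧ g.eval u < 0 ∧ 0 < g.eval v := by
    have hd := g.hasDerivAt y
    have main : ∀ h : Polynomial ℝ, h.eval y = 0 → 0 < h.derivative.eval y →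
        ∃ u v, |u - y| < ε ∧ |v - y| < ε ∧ h.eval u < 0 ∧ 0 < h.eval v := by
      intro h hh0 hh1
      obtain ⟨k, hk⟩ : (Polynomial.X - Polynomial.C y) ∣ h := Polynomial.dvd_iff_isRoot.2 hh0
      have hk1 : 0 < k.eval y := by
        rw [hk] at hh1
        simpa using hh1
      have hev : ∀ᶠ z in 𝓝 y, 0 < k.eval z :=
        k.continuous.continuousAt.eventually (lt_mem_nhds hk1)
      obtain ⟨r, hr, hr'⟩ := Metric.eventually_nhds_iff.1 hev
      have hm : 0 < min r ε / 2 := by positivity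
      have hm1 : min r ε / 2 < r := by have := min_le_left r ε; have := lt_min hr hε; linarith
      have hm2 : min r ε / 2 < ε := by have := min_le_right r ε; have := lt_min hr hε; linarith
      set c := min r ε / 2
      have e1 : |y - c - y| = c := by rw [show y - c - y = -c by ring, abs_neg, abs_of_pos hm]
      have e2 : |y + c - y| = c := by rw [show y + c - y = c by ring, abs_of_pos hm]
      refine ⟨y - c, y + c, by rw [e1]; exact hm2, by rw [e2]; exact hm2, ?_, ?_⟩
      · have := @hr' (y - c) (by rw [Real.dist_eq, e1]; exact hm1)
        rw [hk]
        simp only [Polynomial.eval_mul, Polynomial.eval_sub, Polynomial.eval_X, Polynomial.eval_C]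
        nlinarith
      · have := @hr' (y + c) (by rw [Real.dist_eq, e2]; exact hm1)
        rw [hk]
        simp only [Polynomial.eval_mul, Polynomial.eval_sub, Polynomial.eval_X, Polynomial.eval_C]
        nlinarith
    rcases lt_or_gt_of_ne hg1 with h | h
    · obtain ⟨u, v, hu, hv, h1, h2⟩ := main (-g) (by simp [hg0]) (by simpa using h)
      exact ⟨v, u, hv, hu, by simpa using h2, by simpa using h1⟩
    · exact main g hg0 h
  obtain ⟨u, v, hu, hv, hgu, hgv⟩ := hsign
  rw [hg, Polynomial.eval_map] at hgu hgv
  have e1 : ∀ᶠ b in 𝓝 a, G.eval₂ (eval b) u < 0 :=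
    (cont_eval₂ G u).continuousAt.eventually (gt_mem_nhds hgu)
  have e2 : ∀ᶠ b in 𝓝 a, 0 < G.eval₂ (eval b) v :=
    (cont_eval₂ G v).continuousAt.eventually (lt_mem_nhds hgv)
  filter_upwards [e1, e2] with b hb1 hb2
  have hc : ContinuousOn (fun z => G.eval₂ (eval b) z) (Set.uIcc u v) := by
    simp only [← Polynomial.eval_map]
    exact (Polynomial.continuous _).continuousOn
  have := intermediate_value_uIcc hc
  have h0m : (0:ℝ) ∈ Set.uIcc (G.eval₂ (eval b) u) (G.eval₂ (eval b) v) :=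
    Set.mem_uIcc.2 (Or.inl ⟨hb1.le, hb2.le⟩)
  obtain ⟨z, hz, hz0⟩ := this h0m
  refine ⟨z, ?_, hz0⟩
  rw [abs_lt] at *
  rcases Set.mem_uIcc.1 hz with h | h <;> constructor <;> linarith [h.1, h.2, hu.1, hu.2]

lemma central {F : Type*} [Field F] [Algebra ℝ F] (n : ℕ) : ∀ ξ : Fin n → F,
    ∃ δ : MvPolynomial (Fin n) ℝ, aeval ξ δ ≠ 0 ∧ ∀ a ∈ realPts ξ, eval a δ ≠ 0 →
      ∀ Q : MvPolynomial (Fin n) ℝ, aeval ξ Q ≠ 0 → ∀ U ∈ 𝓝 a,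
        ∃ b ∈ U, b ∈ realPts ξ ∧ eval b Q ≠ 0 := by
  induction n with
  | zero =>
    intro ξ
    refine ⟨1, by simp, ?_⟩
    intro a ha _ Q hQ U hU
    refine ⟨a, mem_of_mem_nhds hU, ha, ?_⟩
    rw [eq_C_of_isEmpty Q] at hQ ⊢
    intro h
    rw [eval_C] at h
    rw [h] at hQ
    simp at hQ
  | succ n ih =>
    intro ξ
    obtain ⟨θ, η, rfl⟩ : ∃ θ η, ξ = Fin.cons θ η := ⟨ξ 0, Fin.tail ξ, (Fin.cons_self_tail ξ).symm⟩
    obtain ⟨δ', hδ', H⟩ := ih η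
    set f : MvPolynomial (Fin n) ℝ →+* F :=
      ((aeval η : MvPolynomial (Fin n) ℝ →ₐ[ℝ] F) : MvPolynomial (Fin n) ℝ →+* F)
      with hf
    have hfa : ∀ s, f s = aeval η s := fun s => rfl
    -- membership in realPts
    have hmem : ∀ y b, (Fin.cons y b : Fin (n+1) → ℝ) ∈ realPts (Fin.cons θ η : Fin (n+1) → F) ↔
        ∀ r : Polynomial (MvPolynomial (Fin n) ℝ), r.eval₂ f θ = 0 → r.eval₂ (eval b) y = 0 := by
      intro y b
      constructor
      · intro h r hr
        have := h ((finSuccEquiv ℝ n).symm r) (by rw [aeval_cons']; simpa using hr)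
        rw [eval_cons'] at this
        simpa using this
      · intro h s hs
        rw [eval_cons']
        apply h
        rw [← hs, aeval_cons']
    have hbase : ∀ y b, (Fin.cons y b : Fin (n+1) → ℝ) ∈
        realPts (Fin.cons θ η : Fin (n+1) → F) → b ∈ realPts η := by
      intro y b h s hs
      have := (hmem y b).1 h (Polynomial.C s) (by simpa [hf] using hs)
      simpa using this
    have hzero : ∀ b ∈ realPts η, ∀ r : Polynomial (MvPolynomial (Fin n) ℝ), r.map f = 0 →
        r.map (eval b) = 0 := by
      intro b hb r hr
      ext i
      rw [Polynomial.coeff_map, Polynomial.coeff_zero]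
      apply hb
      have := congrArg (fun p => p.coeff i) hr
      simpa [hf] using this
    have hnhds : ∀ (y : ℝ) (b : Fin n → ℝ), ∀ U ∈ 𝓝 (Fin.cons y b : Fin (n+1) → ℝ),
        ∃ ε > 0, ∃ W ∈ 𝓝 b, ∀ z c, |z - y| < ε → c ∈ W → (Fin.cons z c : Fin (n+1) → ℝ) ∈ U := by
      intro y b U hU
      have hc : Continuous fun p : ℝ × (Fin n → ℝ) => (Fin.cons p.1 p.2 : Fin (n+1) → ℝ) := by
        fun_prop
      have := hc.continuousAt.preimage_mem_nhds (x := (y, b)) hU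
      rw [nhds_prod_eq, Filter.mem_prod_iff] at this
      obtain ⟨T, hT, W, hW, hTW⟩ := this
      obtain ⟨ε, hε, hεT⟩ := Metric.mem_nhds_iff.1 hT
      refine ⟨ε, hε, W, hW, fun z c hz hcW => ?_⟩
      exact hTW (Set.mk_mem_prod (hεT (by rwa [Metric.mem_ball, Real.dist_eq])) hcW)
    by_cases halg : ∃ G : Polynomial (MvPolynomial (Fin n) ℝ), G.eval₂ f θ = 0 ∧ G.map f ≠ 0
    · -- algebraic case
      classical
      have hex : ∃ d, ∃ G : Polynomial (MvPolynomial (Fin n) ℝ), G.eval₂ f θ = 0 ∧ G.map f ≠ 0 ∧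
          G.natDegree = d := by
        obtain ⟨G, h1, h2⟩ := halg
        exact ⟨_, G, h1, h2, rfl⟩
      obtain ⟨G, hG, hG0, hGd⟩ := Nat.find_spec hex
      have hmin : ∀ r : Polynomial (MvPolynomial (Fin n) ℝ), r.eval₂ f θ = 0 →
          r.natDegree < G.natDegree → r.map f = 0 := by
        intro r hr hd
        by_contra hne
        rw [hGd] at hd
        exact Nat.find_min hex hd ⟨r, hr, hne, rfl⟩
      have hlc : f G.leadingCoeff ≠ 0 := by
        intro h
        -- erase lead
        have h1 : (G.eraseLead).eval₂ f θ = 0 := by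
          have := congrArg (Polynomial.eval₂ f θ) G.eraseLead_add_monomial_natDegree_leadingCoeff
          rw [Polynomial.eval₂_add, Polynomial.eval₂_monomial, h, hG] at this
          simpa using this
        have h2 : (G.eraseLead).map f = G.map f := by
          have := congrArg (Polynomial.map f) G.eraseLead_add_monomial_natDegree_leadingCoeff
          rw [Polynomial.map_add, Polynomial.map_monomial, h] at this
          simpa using this
        by_cases hdeg : G.natDegree = 0
        · apply hG0
          rw [Polynomial.eq_C_of_natDegree_eq_zero hdeg, Polynomial.map_C]
          rw [Polynomial.leadingCoeff, hdeg] at h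
          simp [h]
        · have : G.eraseLead.natDegree < G.natDegree :=
            lt_of_le_of_lt G.eraseLead_natDegree_le (by omega)
          exact hG0 (h2 ▸ hmin _ h1 this)
      have hdeg : 0 < G.natDegree := by
        by_contra hd
        have hd : G.natDegree = 0 := by omega
        rw [Polynomial.leadingCoeff, hd] at hlc
        rw [Polynomial.eq_C_of_natDegree_eq_zero hd, Polynomial.eval₂_C] at hG
        exact hlc hG
      have hder : (Polynomial.derivative G).eval₂ f θ ≠ 0 := by
        intro h
        have := hmin _ h (Polynomial.natDegree_derivative_lt (by omega))
        have h2 := congrArg (fun p => p.coeff (G.natDegree - 1)) this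
        simp only [Polynomial.coeff_map, Polynomial.coeff_derivative, Polynomial.coeff_zero] at h2
        rw [Nat.sub_add_cancel hdeg, map_mul] at h2
        rcases mul_eq_zero.1 h2 with h3 | h3
        · exact hlc h3
        · haveI : CharZero F := charZero_of_injective_algebraMap (algebraMap ℝ F).injective
          rw [map_add, map_natCast, map_one] at h3
          exact Nat.cast_add_one_ne_zero _ h3
      -- key vanishing
      have hvan : ∀ b ∈ realPts η, eval b G.leadingCoeff ≠ 0 → ∀ y, G.eval₂ (eval b) y = 0 →
          ∀ (N : ℕ) (r : Polynomial (MvPolynomial (Fin n) ℝ)), r.natDegree ≤ N →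
            r.eval₂ f θ = 0 → r.eval₂ (eval b) y = 0 := by
        intro b hb hlb y hy N
        have small : ∀ r : Polynomial (MvPolynomial (Fin n) ℝ), r.natDegree < G.natDegree →
            r.eval₂ f θ = 0 → r.eval₂ (eval b) y = 0 := by
          intro r hrd hr
          rw [← Polynomial.eval_map, hzero b hb r (hmin r hr hrd), Polynomial.eval_zero]
        induction N with
        | zero =>
          intro r hrd hr
          exact small r (by omega) hr
        | succ N ihN =>
          intro r hrd hr
          by_cases hlt : r.natDegree < G.natDegree
          · exact small r hlt hr
          push Not at hlt
          by_cases hrN : r.natDegree ≤ N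
          · exact ihN r hrN hr
          set k := r.natDegree - G.natDegree with hk
          set r' := Polynomial.C G.leadingCoeff * r -
            Polynomial.C r.leadingCoeff * Polynomial.X ^ k * G with hr'
          have hr'0 : r'.eval₂ f θ = 0 := by
            rw [hr', Polynomial.eval₂_sub, Polynomial.eval₂_mul, Polynomial.eval₂_mul, hr, hG]
            simp
          have hr'd : r'.natDegree ≤ N := by
            rw [Polynomial.natDegree_le_iff_coeff_eq_zero]
            intro i hi
            have hX : (Polynomial.C r.leadingCoeff * Polynomial.X ^ k * G).coeff i
                = r.leadingCoeff * G.coeff (i - k) := by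
              rw [mul_assoc, Polynomial.coeff_C_mul, Polynomial.coeff_X_pow_mul', if_pos (by omega)]
            rw [hr', Polynomial.coeff_sub, hX, Polynomial.coeff_C_mul]
            rcases Nat.lt_or_ge r.natDegree i with h | h
            · rw [Polynomial.coeff_eq_zero_of_natDegree_lt h,
                Polynomial.coeff_eq_zero_of_natDegree_lt (show G.natDegree < i - k by omega)]
              ring
            · have e1 : i = r.natDegree := by omega
              have e2 : i - k = G.natDegree := by omega
              rw [e2, e1, Polynomial.leadingCoeff, Polynomial.leadingCoeff]
              ring
          have := ihN r' hr'd hr'0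
          rw [hr', Polynomial.eval₂_sub, Polynomial.eval₂_mul, Polynomial.eval₂_mul, hy,
            Polynomial.eval₂_C, mul_zero, sub_zero] at this
          exact (mul_eq_zero.1 this).resolve_left hlb
      refine ⟨(finSuccEquiv ℝ n).symm
        (Polynomial.C δ' * Polynomial.C G.leadingCoeff * Polynomial.derivative G), ?_, ?_⟩
      · rw [aeval_cons', AlgEquiv.apply_symm_apply, Polynomial.eval₂_mul, Polynomial.eval₂_mul,
          Polynomial.eval₂_C, Polynomial.eval₂_C]
        exact mul_ne_zero (mul_ne_zero hδ' hlc) hder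
      · intro a ha had Q hQ U hU
        obtain ⟨y, a', rfl⟩ : ∃ y a', a = Fin.cons y a' :=
          ⟨a 0, Fin.tail a, (Fin.cons_self_tail a).symm⟩
        rw [eval_cons', AlgEquiv.apply_symm_apply, Polynomial.eval₂_mul, Polynomial.eval₂_mul,
          Polynomial.eval₂_C, Polynomial.eval₂_C] at had
        have hd1 : eval a' δ' ≠ 0 := left_ne_zero_of_mul (left_ne_zero_of_mul had)
        have hd2 : eval a' G.leadingCoeff ≠ 0 := right_ne_zero_of_mul (left_ne_zero_of_mul had)
        have hd3 := right_ne_zero_of_mul had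
        have hGa : G.eval₂ (eval a') y = 0 := (hmem y a').1 ha G hG
        obtain ⟨ε, hε, W, hW, hWU⟩ := hnhds y a' U hU
        have hroot := root_near G a' y hGa hd3 ε hε
        have hlcnear : ∀ᶠ b in 𝓝 a', eval b G.leadingCoeff ≠ 0 :=
          (MvPolynomial.continuous_eval _).continuousAt.eventually_ne hd2
        rw [aeval_cons'] at hQ
        obtain ⟨C, hC0, hC⟩ := exists_const_term f θ G hG hG0 _ hQ
        obtain ⟨b, ⟨⟨hbW, z, hz, hGz⟩, hbl⟩, hbV, hbC⟩ := H a' (hbase y a' ha) hd1 (C.coeff 0) hC0 _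
          (Filter.inter_mem (Filter.inter_mem hW hroot) hlcnear)
        have hV : (Fin.cons z b : Fin (n+1) → ℝ) ∈ realPts (Fin.cons θ η : Fin (n+1) → F) := by
          rw [hmem]
          intro r hr
          exact hvan b hbV hbl z hGz _ r le_rfl hr
        refine ⟨Fin.cons z b, hWU z b hz hbW, hV, ?_⟩
        intro hQ0
        rw [eval_cons'] at hQ0
        have hcomp := (hmem z b).1 hV (C.comp (finSuccEquiv ℝ n Q)) (by
          rw [Polynomial.eval₂_comp]; exact hC)
        rw [Polynomial.eval₂_comp, hQ0, Polynomial.eval₂_at_zero] at hcomp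
        exact hbC hcomp
    · push Not at halg
      refine ⟨(finSuccEquiv ℝ n).symm (Polynomial.C δ'), ?_, ?_⟩
      · rw [aeval_cons', AlgEquiv.apply_symm_apply, Polynomial.eval₂_C]
        exact hδ'
      · intro a ha had Q hQ U hU
        obtain ⟨y, a', rfl⟩ : ∃ y a', a = Fin.cons y a' :=
          ⟨a 0, Fin.tail a, (Fin.cons_self_tail a).symm⟩
        rw [eval_cons', AlgEquiv.apply_symm_apply, Polynomial.eval₂_C] at had
        obtain ⟨ε, hε, W, hW, hWU⟩ := hnhds y a' U hU
        rw [aeval_cons'] at hQ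
        set q := finSuccEquiv ℝ n Q with hq
        have hqf : q.map f ≠ 0 := by
          intro h
          apply hQ
          rw [← Polynomial.eval_map]
          rw [← hf, h, Polynomial.eval_zero]
        obtain ⟨i, hi⟩ : ∃ i, f (q.coeff i) ≠ 0 := by
          by_contra hcon
          push Not at hcon
          apply hqf
          ext i
          rw [Polynomial.coeff_map, hcon i, Polynomial.coeff_zero]
        obtain ⟨b, hbW, hbV, hbq⟩ := H a' (hbase y a' ha) had (q.coeff i) hi W hW
        have hqb : q.map (eval b) ≠ 0 := by
          intro h
          apply hbq
          have := congrArg (fun p => p.coeff i) h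
          simpa using this
        obtain ⟨z, hz, hqz⟩ : ∃ z, |z - y| < ε ∧ (q.map (eval b)).eval z ≠ 0 := by
          by_contra hcon
          push Not at hcon
          apply hqb
          apply Polynomial.eq_zero_of_infinite_isRoot
          refine Set.Infinite.mono (s := Set.Ioo (y - ε) (y + ε)) ?_ (Set.Ioo_infinite (by linarith))
          intro z hz
          exact hcon z (by rw [abs_lt]; constructor <;> linarith [hz.1, hz.2])
        refine ⟨Fin.cons z b, hWU z b hz hbW, ?_, ?_⟩
        · rw [hmem]
          intro r hr
          rw [← Polynomial.eval_map, hzero b hbV r (halg r hr), Polynomial.eval_zero]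
        · rw [eval_cons', ← Polynomial.eval_map]
          exact hqz

/-- Polynomials as regulous functions. -/
noncomputable def polyReg (n k : ℕ) : MvPolynomial (Fin n) ℝ →+* regulousRing n k where
  toFun p := ⟨fun x => eval x p, by
    refine ⟨?_, p, 1, one_ne_zero, by simp⟩
    induction p using MvPolynomial.induction_on with
    | C a => simpa using contDiff_const
    | add p q hp hq => simpa using hp.add hq
    | mul_X p i hp =>
      simp only [eval_mul, eval_X]
      exact hp.mul (contDiff_apply ℝ ℝ i)⟩
  map_one' := by ext x; simp
  map_mul' p q := by ext x; simp
  map_zero' := by ext x; simp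
  map_add' p q := by ext x; simp

lemma polyReg_apply (n k : ℕ) (p : MvPolynomial (Fin n) ℝ) (x : Fin n → ℝ) :
    (polyReg n k p : (Fin n → ℝ) → ℝ) x = eval x p := rfl

lemma regulous_isUnit {n k : ℕ} (f : regulousRing n k)
    (h : ∀ x, (f : (Fin n → ℝ) → ℝ) x ≠ 0) : IsUnit f := by
  obtain ⟨f, hf, p, q, hq, hpq⟩ := f
  have hp : p ≠ 0 := by
    rintro rfl
    apply hq
    apply MvPolynomial.funext
    intro x
    have := hpq x
    rw [map_zero] at this
    rw [map_zero]
    exact (mul_eq_zero.1 this).resolve_right (h x)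
  refine IsUnit.of_mul_eq_one ⟨fun x => (f x)⁻¹, hf.inv h, q, p, hp, ?_⟩ ?_
  · intro x
    rw [← hpq x, mul_assoc, mul_inv_cancel₀ (h x), mul_one]
  · ext x
    exact mul_inv_cancel₀ (h x)

/-- A function vanishing on the zero set of an element of a maximal ideal is in the ideal. -/
lemma mem_of_vanish {n k : ℕ} (m : Ideal (regulousRing n k)) (hm : m.IsMaximal)
    (s g : regulousRing n k) (hs : s ∈ m)
    (h : ∀ x, (s : (Fin n → ℝ) → ℝ) x = 0 → (g : (Fin n → ℝ) → ℝ) x = 0) : g ∈ m := by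
  by_contra hg
  obtain ⟨r, u, hu, hr⟩ := hm.exists_inv hg
  apply hm.ne_top
  apply Ideal.eq_top_of_isUnit_mem m (m.add_mem (m.mul_mem_left s hs) (m.mul_mem_left u hu))
  apply regulous_isUnit
  intro x hx
  have hx' : (s : (Fin n → ℝ) → ℝ) x * (s : (Fin n → ℝ) → ℝ) x +
    (u : (Fin n → ℝ) → ℝ) x * (u : (Fin n → ℝ) → ℝ) x = 0 := hx
  have p1 := mul_self_nonneg ((s : (Fin n → ℝ) → ℝ) x)
  have p2 := mul_self_nonneg ((u : (Fin n → ℝ) → ℝ) x)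
  have hsx : (s : (Fin n → ℝ) → ℝ) x = 0 := mul_self_eq_zero.1 (by linarith)
  have hux : (u : (Fin n → ℝ) → ℝ) x = 0 := mul_self_eq_zero.1 (by linarith)
  have h1 : (r : (Fin n → ℝ) → ℝ) x * (g : (Fin n → ℝ) → ℝ) x + (u : (Fin n → ℝ) → ℝ) x = 1 :=
    congrFun (congrArg Subtype.val hr) x
  rw [h x hsx, hux] at h1
  simp at h1

/-- The expansion of `q` along segments to `b`. -/
noncomputable def segPoly {n : ℕ} (b : Fin n → ℝ) (q : MvPolynomial (Fin n) ℝ) :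
    Polynomial (MvPolynomial (Fin n) ℝ) :=
  aeval (fun i => Polynomial.C (X i) + Polynomial.X * Polynomial.C (C (b i) - X i)) q

lemma segPoly_eval {n : ℕ} (b : Fin n → ℝ) (q : MvPolynomial (Fin n) ℝ) (x : Fin n → ℝ) (t : ℝ) :
    ((segPoly b q).map (eval x)).eval t = eval (fun i => x i + t * (b i - x i)) q := by
  unfold segPoly
  induction q using MvPolynomial.induction_on with
  | C a =>
    rw [MvPolynomial.algHom_C, MvPolynomial.eval_C, Polynomial.algebraMap_apply]
    simp
  | add p q hp hq =>
    rw [map_add, Polynomial.map_add, Polynomial.eval_add, hp, hq, map_add]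
  | mul_X p i hp =>
    rw [map_mul, Polynomial.map_mul, Polynomial.eval_mul, hp, map_mul]
    simp

lemma main_exists (n k : ℕ) (m : Ideal (regulousRing n k)) (hm : m.IsMaximal)
    {K : Type*} [Field K] (π : regulousRing n k →+* K) (hπ : ∀ f, π f = 0 ↔ f ∈ m) :
    ∃ a : Fin n → ℝ, ∀ f ∈ m, (f : (Fin n → ℝ) → ℝ) a = 0 := by
  let φ : MvPolynomial (Fin n) ℝ →+* K := π.comp (polyReg n k)
  let _ : Algebra ℝ K := (φ.comp C).toAlgebra
  let ξ : Fin n → K := fun i => φ (X i)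
  have hφ : ∀ s, aeval ξ s = φ s := by
    intro s
    induction s using MvPolynomial.induction_on with
    | C a => rw [MvPolynomial.algHom_C]; rfl
    | add p q hp hq => rw [map_add, map_add, hp, hq]
    | mul_X p i hp => rw [map_mul, map_mul, hp, aeval_X]
  have hφm : ∀ s, aeval ξ s = 0 ↔ polyReg n k s ∈ m := by
    intro s
    rw [hφ]
    exact hπ _
  -- a single equation
  obtain ⟨s, hsm, hs⟩ : ∃ s : MvPolynomial (Fin n) ℝ, polyReg n k s ∈ m ∧
      ∀ x, eval x s = 0 → x ∈ realPts ξ := by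
    obtain ⟨T, hT⟩ := (isNoetherianRing_iff_ideal_fg (MvPolynomial (Fin n) ℝ)).1 inferInstance
      (m.comap (polyReg n k))
    refine ⟨∑ t ∈ T, t * t, ?_, ?_⟩
    · rw [map_sum]
      refine m.sum_mem fun t ht => ?_
      rw [map_mul]
      apply m.mul_mem_left
      have : t ∈ m.comap (polyReg n k) := by rw [← hT]; exact Ideal.subset_span ht
      exact this
    · intro x hx
      rw [map_sum] at hx
      have hx' : ∀ t ∈ T, eval x t = 0 := by
        intro t ht
        have := (Finset.sum_eq_zero_iff_of_nonneg (fun i _ => by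
          rw [map_mul]; exact mul_self_nonneg _)).1 hx t ht
        rw [map_mul] at this
        exact mul_self_eq_zero.1 this
      have hle : m.comap (polyReg n k) ≤ RingHom.ker (eval x) := by
        rw [← hT]
        exact Ideal.span_le.2 fun t ht => hx' t ht
      intro r hr
      exact hle ((hφm r).1 hr)
  have null : ∀ g : regulousRing n k, (∀ x ∈ realPts ξ, (g : (Fin n → ℝ) → ℝ) x = 0) → g ∈ m :=
    fun g hg => mem_of_vanish m hm (polyReg n k s) g hsm fun x hx => hg x (hs x hx)
  obtain ⟨δ, hδ, hcen⟩ := central n ξ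
  obtain ⟨a, ha, had⟩ : ∃ a ∈ realPts ξ, eval a δ ≠ 0 := by
    by_contra hcon
    push Not at hcon
    exact hδ ((hφm δ).2 (null _ hcon))
  refine ⟨a, fun f hf => ?_⟩
  have hfc : Continuous (f : (Fin n → ℝ) → ℝ) := f.2.1.continuous
  obtain ⟨p, q, hq, hpq⟩ := f.2.2
  obtain ⟨b, hb⟩ : ∃ b, eval b q ≠ 0 := by
    by_contra hcon
    push Not at hcon
    exact hq (MvPolynomial.funext fun x => by rw [hcon x, map_zero])
  have hexj : ∃ j, aeval ξ ((segPoly b q).coeff j) ≠ 0 := by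
    by_contra hcon
    push Not at hcon
    have hvan : ∀ x ∈ realPts ξ, False := by
      intro x hx
      have h0 : (segPoly b q).map (eval x) = 0 := by
        ext j
        rw [Polynomial.coeff_map, Polynomial.coeff_zero]
        exact hx _ (hcon j)
      have := segPoly_eval b q x 1
      rw [h0] at this
      apply hb
      simpa using this.symm
    exact hvan a ha
  classical
  have hQ := Nat.find_spec hexj
  have hlow : ∀ i < Nat.find hexj, aeval ξ ((segPoly b q).coeff i) = 0 := fun i hi => by
    simpa using Nat.find_min hexj hi
  set j := Nat.find hexj
  set Q := (segPoly b q).coeff j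
  set P := (segPoly b p).coeff j
  have hQP : ∀ x ∈ realPts ξ, eval x Q * (f : (Fin n → ℝ) → ℝ) x = eval x P := by
    intro x hx
    have := coeff_compare (fun t => (f : (Fin n → ℝ) → ℝ) (fun i => x i + t * (b i - x i)))
      (hfc.comp (by fun_prop)) j ((segPoly b q).map (eval x)) ((segPoly b p).map (eval x))
      (fun t => by rw [segPoly_eval, segPoly_eval]; exact hpq _)
      (fun i hi => by rw [Polynomial.coeff_map]; exact hx _ (hlow i hi))
    simpa [Polynomial.coeff_map] using this
  have hPm : polyReg n k P ∈ m := by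
    have h1 : polyReg n k Q * f - polyReg n k P ∈ m := by
      apply null
      intro x hx
      have := hQP x hx
      change eval x Q * (f : (Fin n → ℝ) → ℝ) x - eval x P = 0
      linarith
    have h2 : polyReg n k Q * f ∈ m := m.mul_mem_left _ hf
    have := m.sub_mem h2 h1
    simpa using this
  by_contra hfa
  have hU : ∀ᶠ x in 𝓝 a, (f : (Fin n → ℝ) → ℝ) x ≠ 0 := hfc.continuousAt.eventually_ne hfa
  obtain ⟨c, hcU, hcV, hcQ⟩ := hcen a ha had Q hQ _ hU
  have h1 := hQP c hcV
  rw [hcV P ((hφm P).2 hPm)] at h1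
  rcases mul_eq_zero.1 h1 with h | h
  · exact hcQ h
  · exact hcU h

/-- **Regulous functions, Proposition `maximal`**: every maximal ideal of `R^k(ℝⁿ)` is the
ideal of functions vanishing at a unique point `x ∈ ℝⁿ`. -/
theorem maximal_ideal_is_point (n k : ℕ) (m : Ideal (regulousRing n k))
    (hm : m.IsMaximal) :
    ∃! x : Fin n → ℝ,
      ∀ f : regulousRing n k, f ∈ m ↔ (f : (Fin n → ℝ) → ℝ) x = 0 := by
  obtain ⟨a, ha⟩ := @main_exists n k m hm _ (Ideal.Quotient.field m)
    (Ideal.Quotient.mk m) (fun f => Ideal.Quotient.eq_zero_iff_mem)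
  have hiff : ∀ f : regulousRing n k, f ∈ m ↔ (f : (Fin n → ℝ) → ℝ) a = 0 := by
    intro f
    refine ⟨ha f, fun hf => ?_⟩
    by_contra hfm
    obtain ⟨r, u, hu, hr⟩ := hm.exists_inv hfm
    have h1 : (r : (Fin n → ℝ) → ℝ) a * (f : (Fin n → ℝ) → ℝ) a + (u : (Fin n → ℝ) → ℝ) a = 1 :=
      congrFun (congrArg Subtype.val hr) a
    rw [hf, ha u hu] at h1
    simp at h1
  refine ⟨a, hiff, fun y hy => ?_⟩
  funext i
  have h1 : polyReg n k (X i - C (a i)) ∈ m := by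
    rw [hiff, polyReg_apply]
    simp
  rw [hy, polyReg_apply] at h1
  simp at h1
  linarith
end
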